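/- arXiv:2306.06778 — 12 statements merged into one kernel-verified Lean document; each statement's English description precedes it below -/
import Mathlib

section
/- Let p ≥ 1 and λ > 0 be real numbers, let n ≥ 1 be an integer, and let x, y_1, …, y_n be nonnegative real numbers. Then (x + ∑_{i=1}^n y_i)^p ≤ (1+λ)^{p-1} · x^p + ((1+λ)·n/λ)^{p-1} · ∑_{i=1}^n y_i^p. -/
theorem aux_scale (c z p : ℝ) (hc : 0 < c) (hz : 0 ≤ z) :
    c⁻¹ * (c * z) ^ p = c ^ (p - 1) * z ^ p := by
  rw [Real.mul_rpow hc.le hz, Real.rpow_sub_one hc.ne']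
  field_simp

theorem stmt0 (p lam : ℝ) (hp : 1 ≤ p) (hlam : 0 < lam) (n : ℕ) (hn : 1 ≤ n)
    (x : ℝ) (hx : 0 ≤ x) (y : Fin n → ℝ) (hy : ∀ i, 0 ≤ y i) :
    (x + ∑ i, y i) ^ p ≤
      (1 + lam) ^ (p - 1) * x ^ p + ((1 + lam) * n / lam) ^ (p - 1) * ∑ i, y i ^ p := by
  have hS : 0 ≤ ∑ i, y i := Finset.sum_nonneg fun i _ => hy i
  have h1 : 0 < 1 + lam := by linarith
  have h2 : 0 < (1 + lam) / lam := by positivity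
  have m1 : (1 + lam) * x ∈ Set.Ici (0 : ℝ) := Set.mem_Ici.2 (by positivity)
  have m2 : (1 + lam) / lam * ∑ i, y i ∈ Set.Ici (0 : ℝ) := Set.mem_Ici.2 (by positivity)
  have a1 : 0 ≤ (1 + lam)⁻¹ := by positivity
  have a2 : 0 ≤ ((1 + lam) / lam)⁻¹ := by positivity
  have a3 : (1 + lam)⁻¹ + ((1 + lam) / lam)⁻¹ = 1 := by field_simp
  have hA := (convexOn_rpow hp).2 m1 m2 a1 a2 a3
  simp only [smul_eq_mul] at hA
  rw [aux_scale _ _ _ h1 hx, aux_scale _ _ _ h2 hS, inv_mul_cancel_left₀ h1.ne',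
    inv_mul_cancel_left₀ h2.ne'] at hA
  have hB := Real.rpow_sum_le_const_mul_sum_rpow_of_nonneg Finset.univ (f := y) hp
    (fun i _ => hy i)
  rw [Finset.card_univ, Fintype.card_fin] at hB
  have hC : ((1 + lam) * n / lam) ^ (p - 1) =
      ((1 + lam) / lam) ^ (p - 1) * (n : ℝ) ^ (p - 1) := by
    rw [← Real.mul_rpow h2.le (Nat.cast_nonneg n)]
    congr 1
    ring
  rw [hC, mul_assoc]
  refine hA.trans ?_
  gcongr
end

section
/- Let F be a finite set (the columns). Let I and V be finite index sets, let {F_i}_{i∈I} be pairwise disjoint subsets of F, and for each v ∈ V let B_v ⊆ P_v ⊆ F with the sets {P_v}_{v∈V} pairwise disjoint. Define a matrix A whose rows are: one row r₀ with entry −1 in every column; for each i ∈ I, one row with entry +1 on the columns in F_i and 0 elsewhere, and one row with entry −1 on the columns in F_i and 0 elsewhere; for each v ∈ V, one row with entry +1 on the columns in B_v and 0 elsewhere, and one row with entry −1 on the columns in P_v and 0 elsewhere. Then A is totally unimodular, i.e., every square submatrix of A has determinant in {−1, 0, 1}. -/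
theorem bip_aux : ∀ (n : ℕ) (N : Matrix (Fin n) (Fin n) ℝ) (c : Fin n → Bool),
    (∀ i j, N i j = 0 ∨ N i j = 1) →
    (∀ i i' j, i ≠ i' → c i = c i' → N i j = 0 ∨ N i' j = 0) →
    N.det ∈ ({-1, 0, 1} : Set ℝ) := by
  intro n
  induction n with
  | zero => intro N c _ _; simp
  | succ n ih =>
    intro N c h01 hc
    by_cases h : ∃ j i0, ∀ i, i ≠ i0 → N i j = 0
    · obtain ⟨j, i0, h⟩ := h
      rw [Matrix.det_succ_column N j, Finset.sum_eq_single i0]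
      · have := ih (N.submatrix i0.succAbove j.succAbove) (fun i => c (i0.succAbove i))
          (fun i k => h01 _ _)
          (fun i i' k hne hcc => hc _ _ _ (fun h => hne (Fin.succAbove_right_injective h)) hcc)
        simp only [Set.mem_insert_iff, Set.mem_singleton_iff] at this ⊢
        rcases neg_one_pow_eq_or ℝ ((i0 : ℕ) + (j : ℕ)) with h1 | h1 <;>
        rcases h01 i0 j with h2 | h2 <;> rcases this with h3 | h3 | h3 <;>
        rw [h1, h2, h3] <;> norm_num
      · intro b _ hb
        rw [h b hb]; ring
      · simp
    · push Not at h
      have : N.det = 0 := by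
        rw [← Matrix.exists_vecMul_eq_zero_iff]
        refine ⟨fun i => if c i then 1 else -1, ?_, ?_⟩
        · intro h0
          have := congrFun h0 0
          simp only [Pi.zero_apply] at this
          split_ifs at this <;> norm_num at this
        · ext j
          obtain ⟨i1, -, h1⟩ := h j 0
          obtain ⟨i2, h21, h2⟩ := h j i1
          have hcne : c i1 ≠ c i2 := fun e => by
            rcases hc i1 i2 j h21.symm e with h | h <;> contradiction
          simp only [Matrix.vecMul, dotProduct, Pi.zero_apply]
          rw [Finset.sum_eq_add_of_mem i1 i2 (Finset.mem_univ _) (Finset.mem_univ _) h21.symm]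
          · rw [(h01 i1 j).resolve_left h1, (h01 i2 j).resolve_left h2]
            revert hcne
            cases c i1 <;> cases c i2 <;> simp
          · intro i _ hi
            have : N i j = 0 := by
              by_cases e : c i = c i1
              · exact (hc i i1 j hi.1 e).resolve_right h1
              · have e2 : c i = c i2 := by
                  revert e hcne
                  cases c i <;> cases c i1 <;> cases c i2 <;> simp
                exact (hc i i2 j hi.2 e2).resolve_right h2
            rw [this, mul_zero]
      rw [this]; simp

theorem det_one_aux {n : ℕ} (E : Matrix (Fin n) (Fin n) ℝ) (p : Fin n → Prop) [DecidablePred p]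
    (h : ∀ i j, E i j ≠ 0 → p i ∧ ¬ p j) : (1 + E).det = 1 := by
  have hE : ∀ i j, ¬ (p i ∧ ¬ p j) → E i j = 0 := fun i j hn => by
    by_contra h0; exact hn (h i j h0)
  rw [Matrix.twoBlockTriangular_det (1 + E) p]
  · have h1 : Matrix.toSquareBlockProp (1 + E) p = 1 := by
      ext i j
      simp [Matrix.toSquareBlockProp, Matrix.one_apply, hE i j (fun h => h.2 j.2), Subtype.ext_iff]
    have h2 : Matrix.toSquareBlockProp (1 + E) (fun i => ¬ p i) = 1 := by
      ext i j
      simp [Matrix.toSquareBlockProp, Matrix.one_apply, hE i j (fun h => i.2 h.1), Subtype.ext_iff]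
    rw [h1, h2]; simp
  · intro i hi j hj
    have : i ≠ j := fun e => hi (e ▸ hj)
    simp [this, hE i j (fun h => hi h.1)]

open Classical in
theorem laminar_aux {n : ℕ} (S : Fin n → Fin n → Prop) (c : Fin n → Bool) (p : Fin n → Prop)
    (h1 : ∀ k k' j, k ≠ k' → c k = c k' → (p k ↔ p k') → S k j → S k' j → False)
    (h2 : ∀ k k', c k = c k' → p k → ¬ p k' →
      (∀ j, S k' j → S k j) ∨ (∀ j, S k j → S k' j → False)) :
    (Matrix.of fun k j => if S k j then (1 : ℝ) else 0).det ∈ ({-1, 0, 1} : Set ℝ) := by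
  set M : Matrix (Fin n) (Fin n) ℝ := Matrix.of fun k j => if S k j then (1 : ℝ) else 0 with hM
  let E : Matrix (Fin n) (Fin n) ℝ := Matrix.of fun k k' =>
    if p k ∧ ¬ p k' ∧ c k = c k' ∧ (∀ j, S k' j → S k j) then -1 else 0
  let T : Fin n → Fin n → Prop := fun k j =>
    S k j ∧ ¬ (p k ∧ ∃ k', ¬ p k' ∧ c k = c k' ∧ S k' j)
  let N : Matrix (Fin n) (Fin n) ℝ := Matrix.of fun k j => if T k j then 1 else 0
  have hdet : (1 + E).det = 1 := by
    apply det_one_aux E p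
    intro i j h
    by_contra hn
    apply h
    simp only [E, Matrix.of_apply]
    rw [if_neg]
    tauto
  have hN : (1 + E) * M = N := by
    ext k j
    rw [Matrix.add_mul, Matrix.one_mul, Matrix.add_apply, Matrix.mul_apply]
    have hterm : ∀ k', E k k' * M k' j =
        if (p k ∧ ¬ p k' ∧ c k = c k' ∧ (∀ j, S k' j → S k j)) ∧ S k' j then -1 else 0 := by
      intro k'
      simp only [E, M, Matrix.of_apply]
      split_ifs <;> simp_all
    simp only [hterm]
    by_cases hx : S k j ∧ p k ∧ ∃ k', ¬ p k' ∧ c k = c k' ∧ S k' j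
    · obtain ⟨hs, hp, k', hp', hcc, hs'⟩ := hx
      rw [Finset.sum_eq_single k']
      · have hsub : ∀ j, S k' j → S k j :=
          (h2 k k' hcc hp hp').resolve_right (fun h => h j hs hs')
        rw [if_pos ⟨⟨hp, hp', hcc, hsub⟩, hs'⟩]
        have : ¬ T k j := fun h => h.2 ⟨hp, k', hp', hcc, hs'⟩
        simp [M, N, this, hs]
      · intro b _ hb
        rw [if_neg]
        rintro ⟨⟨-, hpb, hcb, -⟩, hsb⟩
        exact h1 b k' j hb (hcb.symm.trans hcc) (by tauto) hsb hs'
      · simp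
    · rw [Finset.sum_eq_zero]
      · have : T k j ↔ S k j := ⟨fun h => h.1, fun h => ⟨h, fun h' => hx ⟨h, h'⟩⟩⟩
        simp [M, N, this]
      · intro k' _
        rw [if_neg]
        rintro ⟨⟨hp, hp', hcc, hsub⟩, hs'⟩
        exact hx ⟨hsub _ hs', hp, k', hp', hcc, hs'⟩
  have : M.det = N.det := by rw [← hN, Matrix.det_mul, hdet, one_mul]
  rw [this]
  apply bip_aux n N c
  · intro i j
    simp only [N, Matrix.of_apply]
    split_ifs <;> simp
  · intro i i' j hne hcc
    by_contra! hcon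
    simp only [N, Matrix.of_apply, ne_eq, ite_eq_right_iff, one_ne_zero, imp_false,
      not_not] at hcon
    obtain ⟨⟨a1, a2⟩, b1, b2⟩ := hcon
    by_cases hp : p i <;> by_cases hp' : p i'
    · exact h1 i i' j hne hcc (by tauto) a1 b1
    · exact a2 ⟨hp, i', hp', hcc, b1⟩
    · exact b2 ⟨hp', i, hp, hcc.symm, a1⟩
    · exact h1 i i' j hne hcc (by tauto) a1 b1

theorem stmt7 {F I V : Type*} [Fintype F] [DecidableEq F] [Fintype I] [Fintype V]
    (G : I → Finset F) (hG : ∀ i j : I, i ≠ j → Disjoint (G i) (G j))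
    (B P : V → Finset F) (hBP : ∀ v, B v ⊆ P v)
    (hP : ∀ v w : V, v ≠ w → Disjoint (P v) (P w))
    (A : Matrix (Unit ⊕ I ⊕ I ⊕ V ⊕ V) F ℝ)
    (hA : A = fun r u =>
      match r with
      | .inl _ => -1
      | .inr (.inl i) => if u ∈ G i then 1 else 0
      | .inr (.inr (.inl i)) => if u ∈ G i then -1 else 0
      | .inr (.inr (.inr (.inl v))) => if u ∈ B v then 1 else 0
      | .inr (.inr (.inr (.inr v))) => if u ∈ P v then -1 else 0) :
    ∀ (n : ℕ) (f : Fin n → Unit ⊕ I ⊕ I ⊕ V ⊕ V) (g : Fin n → F),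
      Function.Injective f → Function.Injective g →
      (A.submatrix f g).det ∈ ({-1, 0, 1} : Set ℝ) := by
  classical
  intro n f g hf hg
  let S : (Unit ⊕ I ⊕ I ⊕ V ⊕ V) → F → Prop := fun r u =>
    match r with
    | .inl _ => True
    | .inr (.inl i) => u ∈ G i
    | .inr (.inr (.inl i)) => u ∈ G i
    | .inr (.inr (.inr (.inl v))) => u ∈ B v
    | .inr (.inr (.inr (.inr v))) => u ∈ P v
  let s : (Unit ⊕ I ⊕ I ⊕ V ⊕ V) → ℝ := fun r =>
    match r with
    | .inl _ => -1
    | .inr (.inl _) => 1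
    | .inr (.inr (.inl _)) => -1
    | .inr (.inr (.inr (.inl _))) => 1
    | .inr (.inr (.inr (.inr _))) => -1
  let c : (Unit ⊕ I ⊕ I ⊕ V ⊕ V) → Bool := fun r =>
    match r with
    | .inl _ => true
    | .inr (.inl _) => true
    | .inr (.inr (.inl _)) => true
    | .inr (.inr (.inr (.inl _))) => false
    | .inr (.inr (.inr (.inr _))) => false
  let p : (Unit ⊕ I ⊕ I ⊕ V ⊕ V) → Prop := fun r =>
    match r with
    | .inl _ => True
    | .inr (.inl _) => False
    | .inr (.inr (.inl _)) => False
    | .inr (.inr (.inr (.inl _))) => False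
    | .inr (.inr (.inr (.inr _))) => True
  have hGd : ∀ i j u, u ∈ G i → u ∈ G j → i = j := fun i j u h h' => by
    by_contra hne; exact Finset.disjoint_left.1 (hG i j hne) h h'
  have hPd : ∀ i j u, u ∈ P i → u ∈ P j → i = j := fun i j u h h' => by
    by_contra hne; exact Finset.disjoint_left.1 (hP i j hne) h h'
  let M : Matrix (Fin n) (Fin n) ℝ := Matrix.of fun k j => if S (f k) (g j) then (1 : ℝ) else 0
  have hAM : A.submatrix f g = Matrix.of fun k j => s (f k) * M k j := by
    ext k j
    rw [Matrix.submatrix_apply, hA]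
    simp only [Matrix.of_apply, M]
    rcases f k with _ | i | i | v | v <;> simp [S, s]
  have hs : ∀ r, s r = 1 ∨ s r = -1 := by
    rintro (_ | i | i | v | v) <;> simp [s]
  have hprod : (∏ k, s (f k)) = 1 ∨ (∏ k, s (f k)) = -1 := by
    refine Finset.prod_induction _ (fun x : ℝ => x = 1 ∨ x = -1) ?_ (Or.inl rfl)
      (fun k _ => hs _)
    rintro a b (rfl | rfl) (rfl | rfl) <;> norm_num
  have hMdet : M.det ∈ ({-1, 0, 1} : Set ℝ) := by
    by_cases hdup : ∃ k k' i, f k = .inr (.inl i) ∧ f k' = .inr (.inr (.inl i))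
    · obtain ⟨k, k', i, hk, hk'⟩ := hdup
      have : M.det = 0 := by
        refine Matrix.det_zero_of_row_eq (i := k) (j := k') ?_ ?_
        · rintro rfl; simp [hk] at hk'
        · ext j; simp [M, hk, hk', S]
      rw [this]; simp
    · push Not at hdup
      apply laminar_aux (fun k j => S (f k) (g j)) (fun k => c (f k)) (fun k => p (f k))
      · intro k k' j hne
        have hne' : f k ≠ f k' := fun h => hne (hf h)
        have d1 := hdup k k'
        have d2 := hdup k' k
        revert hne' d1 d2
        rcases f k with _ | i | i | v | v <;> rcases f k' with _ | i' | i' | v' | v' <;>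
          simp [S, c, p]
        · intro h a b; exact h (hGd _ _ _ a b)
        · intro h a b; exact h (hGd _ _ _ a b).symm
        · intro h a b; exact h (hGd _ _ _ a b)
        · intro h a b; exact h (hGd _ _ _ a b)
        · intro h a b; exact h (hPd _ _ _ (hBP _ a) (hBP _ b))
        · intro h a b; exact h (hPd _ _ _ a b)
      · intro k k'
        rcases f k with _ | i | i | v | v <;> rcases f k' with _ | i' | i' | v' | v' <;>
          simp [S, c, p]
        by_cases h : v = v'
        · subst h; exact Or.inl fun j hj => hBP _ hj
        · exact Or.inr fun j a b => h (hPd _ _ _ a (hBP _ b))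
  rw [hAM, Matrix.det_mul_column]
  simp only [Set.mem_insert_iff, Set.mem_singleton_iff] at hMdet ⊢
  rcases hprod with h | h <;> rcases hMdet with h' | h' | h' <;> rw [h, h'] <;> norm_num
end

section
/- Let F be a finite set, let I and V be finite index sets, let {F_i}_{i∈I} be pairwise disjoint subsets of F, and for each v ∈ V let B_v ⊆ P_v ⊆ F where the sets {P_v}_{v∈V} are pairwise disjoint. Let k ∈ ℕ and, for each i ∈ I, integers α_i, β_i ≥ 0. Let Q be the set of all y : F → ℝ such that: y_u ≥ 0 for all u; α_i ≤ ∑_{u∈F_i} y_u ≤ β_i for all i ∈ I; ∑_{u∈F} y_u ≤ k; and for every v ∈ V, ∑_{u∈B_v} y_u ≥ 1/2 and ∑_{u∈P_v} y_u ≤ 1. Then for every cost function c : F → ℝ, if Q is nonempty, there exists y* ∈ Q such that ∑_{u∈F} c_u · y*_u ≤ ∑_{u∈F} c_u · y_u for every y ∈ Q, and 2·y*_u is an integer for every u ∈ F. -/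
/-- The feasible region `Q` of the linear program `StructuredLP`. -/
def StructuredLPFeasible {F I V : Type*} [Fintype F]
    (G : I → Finset F) (B P : V → Finset F) (k : ℕ) (α β : I → ℕ) (y : F → ℝ) : Prop :=
  (∀ u, 0 ≤ y u) ∧
  (∀ i, (α i : ℝ) ≤ ∑ u ∈ G i, y u ∧ ∑ u ∈ G i, y u ≤ (β i : ℝ)) ∧
  (∑ u, y u ≤ (k : ℝ)) ∧
  (∀ v, 1 / 2 ≤ ∑ u ∈ B v, y u ∧ ∑ u ∈ P v, y u ≤ 1)


namespace FairLP

def H (x : ℝ) : Prop := ∃ z : ℤ, 2 * x = (z : ℝ)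

lemma H.add {x y : ℝ} (hx : H x) (hy : H y) : H (x + y) := by
  obtain ⟨a, ha⟩ := hx
  obtain ⟨b, hb⟩ := hy
  exact ⟨a + b, by push_cast; linarith⟩

lemma H.sub {x y : ℝ} (hx : H x) (hy : H y) : H (x - y) := by
  obtain ⟨a, ha⟩ := hx
  obtain ⟨b, hb⟩ := hy
  exact ⟨a - b, by push_cast; linarith⟩

lemma H.zero : H 0 := ⟨0, by simp⟩

lemma H.sum {ι : Type*} (s : Finset ι) (f : ι → ℝ) (h : ∀ i ∈ s, H (f i)) : H (∑ i ∈ s, f i) := by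
  classical
  induction s using Finset.induction_on with
  | empty => simpa using H.zero
  | insert a s ha ih =>
    rw [Finset.sum_insert ha]
    exact (h a (by simp)).add (ih fun i hi => h i (by simp [hi]))

/-- Kernel lemma. -/
lemma kernel {F A C : Type*} [Fintype F] [DecidableEq F] [Fintype A] [Fintype C]
    (E : Finset F) (hE : E.Nonempty)
    (p : A → Finset F) (q : C → Finset F)
    (hp : ∀ a b, a ≠ b → Disjoint (p a) (p b))
    (hq : ∀ a b, a ≠ b → Disjoint (q a) (q b))
    (hpE : ∀ a, p a ⊆ E) (hqE : ∀ a, q a ⊆ E)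
    (hp2 : ∀ a, (p a).Nonempty → 2 ≤ (p a).card)
    (hq2 : ∀ a, (q a).Nonempty → 2 ≤ (q a).card) :
    ∃ d : F → ℝ, d ≠ 0 ∧ (∀ u, u ∉ E → d u = 0) ∧ (∀ a, ∑ u ∈ p a, d u = 0) ∧
      (∀ a, ∑ u ∈ q a, d u = 0) := by
  classical
  let SA : Finset A := Finset.univ.filter fun a => (p a).Nonempty
  let SC : Finset C := Finset.univ.filter fun a => (q a).Nonempty
  let e : (E → ℝ) →ₗ[ℝ] (F → ℝ) :=
    { toFun := fun d u => if h : u ∈ E then d ⟨u, h⟩ else 0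
      map_add' := by intro x y; ext u; by_cases h : u ∈ E <;> simp [h]
      map_smul' := by intro x y; ext u; by_cases h : u ∈ E <;> simp [h] }
  let L : (E → ℝ) →ₗ[ℝ] ((SA → ℝ) × (SC → ℝ)) :=
    { toFun := fun d => (fun a => ∑ u ∈ p a, e d u, fun a => ∑ u ∈ q a, e d u)
      map_add' := by
        intro x y
        ext a <;> simp [Finset.sum_add_distrib]
      map_smul' := by
        intro x y
        ext a <;> simp [Finset.mul_sum] }
  have hsuba : SA.biUnion p ⊆ E := Finset.biUnion_subset.2 fun a _ => hpE a
  have hsubc : SC.biUnion q ⊆ E := Finset.biUnion_subset.2 fun a _ => hqE a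
  have hcardA : (SA.biUnion p).card = ∑ a ∈ SA, (p a).card :=
    Finset.card_biUnion fun a _ b _ hab => hp a b hab
  have hcardC : (SC.biUnion q).card = ∑ a ∈ SC, (q a).card :=
    Finset.card_biUnion fun a _ b _ hab => hq a b hab
  have h2A : SA.card * 2 ≤ ∑ a ∈ SA, (p a).card := by
    have := Finset.card_nsmul_le_sum SA (fun a => (p a).card) 2
      (fun a ha => hp2 a (Finset.mem_filter.1 ha).2)
    simpa using this
  have h2C : SC.card * 2 ≤ ∑ a ∈ SC, (q a).card := by
    have := Finset.card_nsmul_le_sum SC (fun a => (q a).card) 2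
      (fun a ha => hq2 a (Finset.mem_filter.1 ha).2)
    simpa using this
  have hcA := Finset.card_le_card hsuba
  have hcC := Finset.card_le_card hsubc
  have hfr1 : Module.finrank ℝ (E → ℝ) = E.card := by simp
  have hfr2 : Module.finrank ℝ ((SA → ℝ) × (SC → ℝ)) = SA.card + SC.card := by simp
  have hninj : ¬ Function.Injective L := by
    intro hinj
    have hle := LinearMap.finrank_le_finrank_of_injective hinj
    rw [hfr1, hfr2] at hle
    have hEq : Module.finrank ℝ (E → ℝ) = Module.finrank ℝ ((SA → ℝ) × (SC → ℝ)) := by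
      rw [hfr1, hfr2]; omega
    have hsurj : Function.Surjective L :=
      (LinearMap.injective_iff_surjective_of_finrank_eq_finrank hEq).1 hinj
    have hA : SA.biUnion p = E := Finset.eq_of_subset_of_card_le hsuba (by omega)
    have hC : SC.biUnion q = E := Finset.eq_of_subset_of_card_le hsubc (by omega)
    obtain ⟨d, hd⟩ := hsurj (fun _ => 1, fun _ => 0)
    have h1 : ∀ a ∈ SA, ∑ u ∈ p a, e d u = 1 := fun a ha =>
      congrFun (congrArg Prod.fst hd) ⟨a, ha⟩
    have h2 : ∀ a ∈ SC, ∑ u ∈ q a, e d u = 0 := fun a ha =>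
      congrFun (congrArg Prod.snd hd) ⟨a, ha⟩
    have t1 : ∑ u ∈ E, e d u = SA.card := by
      rw [Finset.sum_congr hA.symm fun _ _ => rfl, Finset.sum_biUnion fun a _ b _ hab => hp a b hab, Finset.sum_congr rfl h1]
      simp
    have t2 : ∑ u ∈ E, e d u = 0 := by
      rw [Finset.sum_congr hC.symm fun _ _ => rfl, Finset.sum_biUnion fun a _ b _ hab => hq a b hab, Finset.sum_congr rfl h2]
      simp
    have : SA.card = 0 := by
      have := t1.symm.trans t2
      exact_mod_cast this
    have hpos := hE.card_pos
    omega
  have : ∃ d, L d = 0 ∧ d ≠ 0 := by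
    by_contra hcon
    push Not at hcon
    exact hninj ((injective_iff_map_eq_zero L).2 hcon)
  obtain ⟨d, hd, hd0⟩ := this
  refine ⟨e d, ?_, ?_, ?_, ?_⟩
  · intro h0
    apply hd0
    ext ⟨u, hu⟩
    have := congrFun h0 u
    simpa [e, hu] using this
  · intro u hu
    simp [e, hu]
  · intro a
    by_cases ha : (p a).Nonempty
    · exact congrFun (congrArg Prod.fst hd) ⟨a, by simp [SA, ha]⟩
    · rw [Finset.not_nonempty_iff_eq_empty] at ha
      simp [ha]
  · intro a
    by_cases ha : (q a).Nonempty
    · exact congrFun (congrArg Prod.snd hd) ⟨a, by simp [SC, ha]⟩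
    · rw [Finset.not_nonempty_iff_eq_empty] at ha
      simp [ha]

/-- Kernel lemma for half-integral classes. -/
lemma kernel2 {F A C : Type*} [Fintype F] [DecidableEq F] [Fintype A] [Fintype C]
    (y : F → ℝ) (hy : ∃ u, ¬ H (y u))
    (p : A → Finset F) (q : C → Finset F)
    (hp : ∀ a b, a ≠ b → Disjoint (p a) (p b))
    (hq : ∀ a b, a ≠ b → Disjoint (q a) (q b))
    (hpH : ∀ a, H (∑ u ∈ p a, y u)) (hqH : ∀ a, H (∑ u ∈ q a, y u)) :
    ∃ d : F → ℝ, d ≠ 0 ∧ (∀ u, H (y u) → d u = 0) ∧ (∀ a, ∑ u ∈ p a, d u = 0) ∧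
      (∀ a, ∑ u ∈ q a, d u = 0) := by
  classical
  have key : ∀ s : Finset F, H (∑ u ∈ s, y u) → (s.filter fun u => ¬ H (y u)).Nonempty →
      2 ≤ (s.filter fun u => ¬ H (y u)).card := by
    intro s hs hne
    by_contra hlt
    have h1 : (s.filter fun u => ¬ H (y u)).card = 1 := by
      have := hne.card_pos
      omega
    obtain ⟨u, hu⟩ := Finset.card_eq_one.1 h1
    have hmem : u ∈ s.filter fun u => ¬ H (y u) := by rw [hu]; simp
    apply (Finset.mem_filter.1 hmem).2
    have hsum := Finset.sum_filter_add_sum_filter_not s (fun u => H (y u)) y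
    rw [hu, Finset.sum_singleton] at hsum
    have : y u = ∑ u ∈ s, y u - ∑ u ∈ s.filter (fun u => H (y u)), y u := by linarith
    rw [this]
    exact hs.sub (H.sum _ _ fun i hi => (Finset.mem_filter.1 hi).2)
  obtain ⟨d, hd0, hdE, h1, h2⟩ := kernel (Finset.univ.filter fun u => ¬ H (y u))
    (by obtain ⟨u, hu⟩ := hy; exact ⟨u, by simp [hu]⟩)
    (fun a => (p a).filter fun u => ¬ H (y u)) (fun a => (q a).filter fun u => ¬ H (y u))
    (fun a b hab => Finset.disjoint_filter_filter (hp a b hab))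
    (fun a b hab => Finset.disjoint_filter_filter (hq a b hab))
    (fun a => Finset.filter_subset_filter _ (Finset.subset_univ _))
    (fun a => Finset.filter_subset_filter _ (Finset.subset_univ _))
    (fun a => key _ (hpH a)) (fun a => key _ (hqH a))
  have hdE' : ∀ u, H (y u) → d u = 0 := fun u hu => hdE u (by simp [hu])
  have red : ∀ s : Finset F, ∑ u ∈ s.filter (fun u => ¬ H (y u)), d u = ∑ u ∈ s, d u := by
    intro s
    apply Finset.sum_filter_of_ne
    intro u _ hu hH
    exact hu (hdE' u hH)
  exact ⟨d, hd0, hdE', fun a => by rw [← red]; exact h1 a, fun a => by rw [← red]; exact h2 a⟩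

lemma direction {F I V : Type*} [Fintype F] [Fintype I] [Fintype V]
    (G : I → Finset F) (hG : ∀ i j : I, i ≠ j → Disjoint (G i) (G j))
    (B P : V → Finset F) (hBP : ∀ v, B v ⊆ P v)
    (hP : ∀ v w : V, v ≠ w → Disjoint (P v) (P w))
    (y : F → ℝ) (hy : ∃ u, ¬ H (y u)) :
    ∃ d : F → ℝ, d ≠ 0 ∧ (∀ u, H (y u) → d u = 0) ∧
      (∀ i, H (∑ u ∈ G i, y u) → ∑ u ∈ G i, d u = 0) ∧
      (H (∑ u, y u) → ∑ u, d u = 0) ∧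
      (∀ v, H (∑ u ∈ B v, y u) → ∑ u ∈ B v, d u = 0) ∧
      (∀ v, H (∑ u ∈ P v, y u) → ∑ u ∈ P v, d u = 0) := by
  classical
  let g : I → Finset F := fun i => if H (∑ u ∈ G i, y u) then G i else ∅
  let r : Finset F := if H (∑ u, y u) then Finset.univ \ Finset.univ.biUnion g else ∅
  let b : V → Finset F := fun v => if H (∑ u ∈ B v, y u) then B v else ∅
  let t : V → Finset F := fun v => if H (∑ u ∈ P v, y u) then P v \ b v else ∅
  have hgG : ∀ i, g i ⊆ G i := by intro i; simp only [g]; split_ifs <;> simp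
  have hbB : ∀ i, b i ⊆ B i := by intro i; simp only [b]; split_ifs <;> simp
  have hbP : ∀ i, b i ⊆ P i := fun i => (hbB i).trans (hBP i)
  have htP : ∀ i, t i ⊆ P i := by intro i; simp only [t]; split_ifs <;> simp
  have hgd : ∀ i j, i ≠ j → Disjoint (g i) (g j) := fun i j hij =>
    Finset.disjoint_of_subset_left (hgG i) (Finset.disjoint_of_subset_right (hgG j) (hG i j hij))
  have hrg : ∀ i, Disjoint r (g i) := by
    intro i
    simp only [r]
    split_ifs
    · exact Finset.disjoint_of_subset_right (Finset.subset_biUnion_of_mem g (Finset.mem_univ i))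
        Finset.sdiff_disjoint
    · simp
  have htb : ∀ v, Disjoint (t v) (b v) := by
    intro v
    simp only [t]
    split_ifs
    · exact Finset.sdiff_disjoint
    · simp
  have htb' : ∀ v w, Disjoint (t v) (b w) := by
    intro v w
    by_cases h : v = w
    · subst h; exact htb v
    · exact Finset.disjoint_of_subset_left (htP v)
        (Finset.disjoint_of_subset_right (hbP w) (hP v w h))
  have hgH : ∀ i, H (∑ u ∈ g i, y u) := by
    intro i; simp only [g]; split_ifs with h
    · exact h
    · simpa using H.zero
  have hbH : ∀ i, H (∑ u ∈ b i, y u) := by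
    intro i; simp only [b]; split_ifs with h
    · exact h
    · simpa using H.zero
  have hUd : ∀ f : F → ℝ, ∑ u ∈ Finset.univ.biUnion g, f u = ∑ i, ∑ u ∈ g i, f u := fun f =>
    Finset.sum_biUnion fun a _ b _ hab => hgd a b hab
  have hrH : H (∑ u ∈ r, y u) := by
    simp only [r]; split_ifs with h
    · have := Finset.sum_sdiff (f := y) (Finset.subset_univ (Finset.univ.biUnion g))
      rw [eq_sub_of_add_eq this, hUd]
      exact h.sub (H.sum _ _ fun i _ => hgH i)
    · simpa using H.zero
  have htH : ∀ v, H (∑ u ∈ t v, y u) := by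
    intro v
    simp only [t]; split_ifs with h
    · rw [eq_sub_of_add_eq (Finset.sum_sdiff (f := y) (hbP v))]
      exact h.sub (hbH v)
    · simpa using H.zero
  obtain ⟨d, hd0, hdy, h1, h2⟩ := kernel2 y hy
    (fun o : Option I => o.elim r g) (fun o : V ⊕ V => Sum.elim b t o)
    (by
      rintro (_ | i) (_ | j) hij
      · exact absurd rfl hij
      · exact hrg j
      · exact (hrg i).symm
      · exact hgd i j fun h => hij (by rw [h]))
    (by
      rintro (v | v) (w | w) hij
      · exact Finset.disjoint_of_subset_left (hbP v)
          (Finset.disjoint_of_subset_right (hbP w) (hP v w fun h => hij (by rw [h])))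
      · exact (htb' w v).symm
      · exact htb' v w
      · exact Finset.disjoint_of_subset_left (htP v)
          (Finset.disjoint_of_subset_right (htP w) (hP v w fun h => hij (by rw [h]))))
    (by
      rintro (_ | i)
      · exact hrH
      · exact hgH i)
    (by
      rintro (v | v)
      · exact hbH v
      · exact htH v)
  have hg0 : ∀ i, ∑ u ∈ g i, d u = 0 := fun i => h1 (some i)
  have hr0 : ∑ u ∈ r, d u = 0 := h1 none
  have hb0 : ∀ i, ∑ u ∈ b i, d u = 0 := fun i => h2 (Sum.inl i)
  have ht0 : ∀ i, ∑ u ∈ t i, d u = 0 := fun i => h2 (Sum.inr i)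
  refine ⟨d, hd0, hdy, ?_, ?_, ?_, ?_⟩
  · intro i h
    have := hg0 i
    simpa only [g, if_pos h] using this
  · intro h
    rw [← Finset.sum_sdiff (f := d) (Finset.subset_univ (Finset.univ.biUnion g)), hUd]
    simp only [r, if_pos h] at hr0
    rw [hr0]
    simp [hg0]
  · intro i h
    have := hb0 i
    simpa only [b, if_pos h] using this
  · intro v h
    rw [← Finset.sum_sdiff (f := d) (hbP v), hb0]
    have := ht0 v
    simp only [t, if_pos h] at this
    rw [this]; simp

lemma ev_le {x s a : ℝ} (ha : H a) (hxa : x ≤ a) (hs : H x → s = 0) :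
    ∀ᶠ t : ℝ in nhds 0, x + t * s ≤ a := by
  by_cases h : H x
  · simp [hs h, hxa]
  · have hlt : x < a := lt_of_le_of_ne hxa fun e => h (e ▸ ha)
    have hc : Filter.Tendsto (fun t : ℝ => x + t * s) (nhds 0) (nhds (x + 0 * s)) :=
      (by fun_prop : Continuous fun t : ℝ => x + t * s).tendsto 0
    exact (hc.eventually_lt_const (by simpa using hlt)).mono fun t ht => ht.le

lemma ev_ge {x s a : ℝ} (ha : H a) (hxa : a ≤ x) (hs : H x → s = 0) :
    ∀ᶠ t : ℝ in nhds 0, a ≤ x + t * s := by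
  by_cases h : H x
  · simp [hs h, hxa]
  · have hlt : a < x := lt_of_le_of_ne hxa fun e => h (e ▸ ha)
    have hc : Filter.Tendsto (fun t : ℝ => x + t * s) (nhds 0) (nhds (x + 0 * s)) :=
      (by fun_prop : Continuous fun t : ℝ => x + t * s).tendsto 0
    exact (hc.eventually_const_lt (by simpa using hlt)).mono fun t ht => ht.le

lemma H.nat (n : ℕ) : H n := ⟨2 * n, by push_cast; ring⟩

end FairLP

open FairLP in

theorem stmt8 {F I V : Type*} [Fintype F] [Fintype I] [Fintype V]
    (G : I → Finset F) (hG : ∀ i j : I, i ≠ j → Disjoint (G i) (G j))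
    (B P : V → Finset F) (hBP : ∀ v, B v ⊆ P v)
    (hP : ∀ v w : V, v ≠ w → Disjoint (P v) (P w))
    (k : ℕ) (α β : I → ℕ)
    (c : F → ℝ)
    (hne : ∃ y : F → ℝ, StructuredLPFeasible G B P k α β y) :
    ∃ ystar : F → ℝ, StructuredLPFeasible G B P k α β ystar ∧
      (∀ y : F → ℝ, StructuredLPFeasible G B P k α β y →
        ∑ u, c u * ystar u ≤ ∑ u, c u * y u) ∧
      (∀ u, ∃ z : ℤ, 2 * ystar u = (z : ℝ)) := by

  classical
  let Q : Set (F → ℝ) := {y | StructuredLPFeasible G B P k α β y}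
  have hclosed : IsClosed Q := by
    simp only [Q, StructuredLPFeasible, Set.ofPred_and, Set.ofPred_forall]
    refine IsClosed.inter ?_ (IsClosed.inter ?_ (IsClosed.inter ?_ ?_))
    · exact isClosed_iInter fun u => isClosed_le (by fun_prop) (by fun_prop)
    · exact isClosed_iInter fun u => (isClosed_le (by fun_prop) (by fun_prop)).inter
        (isClosed_le (by fun_prop) (by fun_prop))
    · exact isClosed_le (by fun_prop) (by fun_prop)
    · exact isClosed_iInter fun u => (isClosed_le (by fun_prop) (by fun_prop)).inter
        (isClosed_le (by fun_prop) (by fun_prop))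
  have hcompact : IsCompact Q := by
    refine IsCompact.of_isClosed_subset
      (isCompact_Icc : IsCompact (Set.Icc (0 : F → ℝ) (fun _ => (k : ℝ)))) hclosed ?_
    rintro y ⟨h0, -, hk, -⟩
    refine ⟨h0, fun u => le_trans ?_ hk⟩
    exact Finset.single_le_sum (fun i _ => h0 i) (Finset.mem_univ u)
  let M : Set (F → ℝ) := Q ∩ {y | ∀ y' ∈ Q, ∑ u, c u * y u ≤ ∑ u, c u * y' u}
  have hMcl : IsClosed M := by
    refine hclosed.inter ?_
    simp only [Set.ofPred_forall]
    exact isClosed_iInter fun y' => isClosed_iInter fun _ =>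
      isClosed_le (by fun_prop) (by fun_prop)
  have hMc : IsCompact M := hcompact.of_isClosed_subset hMcl Set.inter_subset_left
  have hMne : M.Nonempty := by
    obtain ⟨y, hy, hmin⟩ := hcompact.exists_isMinOn hne
      (f := fun y : F → ℝ => ∑ u, c u * y u) (by fun_prop)
    exact ⟨y, hy, fun y' hy' => hmin hy'⟩
  obtain ⟨y, hyM, hext⟩ := hMc.extremePoints_nonempty hMne
  refine ⟨y, hyM.1, fun y' hy' => hyM.2 y' hy', ?_⟩
  by_contra hcon
  have hcon' : ∃ u, ¬ H (y u) := by
    by_contra h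
    push Not at h
    exact hcon h
  obtain ⟨d, hd0, hdy, hdG, hdU, hdB, hdP⟩ := direction G hG B P hBP hP y hcon'
  obtain ⟨f0, fG, fk, fV⟩ := hyM.1
  have hsum : ∀ (s : Finset F) (t : ℝ),
      ∑ u ∈ s, (y + t • d) u = ∑ u ∈ s, y u + t * ∑ u ∈ s, d u := by
    intro s t
    simp [Finset.sum_add_distrib, Finset.mul_sum]
  have hev : ∀ᶠ t : ℝ in nhds 0, y + t • d ∈ Q := by
    have e1 : ∀ᶠ t : ℝ in nhds 0, ∀ u, 0 ≤ y u + t * d u :=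
      Filter.eventually_all.2 fun u => ev_ge H.zero (f0 u) (hdy u)
    have e2 : ∀ᶠ t : ℝ in nhds 0, ∀ i, (α i : ℝ) ≤ ∑ u ∈ G i, y u + t * ∑ u ∈ G i, d u :=
      Filter.eventually_all.2 fun i => ev_ge (H.nat _) (fG i).1 (hdG i)
    have e3 : ∀ᶠ t : ℝ in nhds 0, ∀ i, ∑ u ∈ G i, y u + t * ∑ u ∈ G i, d u ≤ (β i : ℝ) :=
      Filter.eventually_all.2 fun i => ev_le (H.nat _) (fG i).2 (hdG i)
    have e4 : ∀ᶠ t : ℝ in nhds 0, ∑ u, y u + t * ∑ u, d u ≤ (k : ℝ) :=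
      ev_le (H.nat _) fk hdU
    have e5 : ∀ᶠ t : ℝ in nhds 0, ∀ v, 1 / 2 ≤ ∑ u ∈ B v, y u + t * ∑ u ∈ B v, d u :=
      Filter.eventually_all.2 fun i => ev_ge ⟨1, by norm_num⟩ (fV i).1 (hdB i)
    have e6 : ∀ᶠ t : ℝ in nhds 0, ∀ v, ∑ u ∈ P v, y u + t * ∑ u ∈ P v, d u ≤ 1 :=
      Filter.eventually_all.2 fun i => ev_le ⟨2, by norm_num⟩ (fV i).2 (hdP i)
    filter_upwards [e1, e2, e3, e4, e5, e6] with t h1 h2 h3 h4 h5 h6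
    refine ⟨fun u => by simpa using h1 u, fun i => ?_, ?_, fun v => ?_⟩
    · rw [hsum]; exact ⟨h2 i, h3 i⟩
    · rw [hsum]; exact h4
    · rw [hsum, hsum]; exact ⟨h5 v, h6 v⟩
  obtain ⟨ε, hε, hball⟩ := Metric.eventually_nhds_iff.1 hev
  have hp : y + (ε / 2) • d ∈ Q := hball (by simp [abs_of_pos hε]; linarith)
  have hm : y + (-(ε / 2)) • d ∈ Q := hball (by simp [abs_of_pos hε]; linarith)
  have hcost : ∀ t : ℝ, ∑ u, c u * (y + t • d) u = ∑ u, c u * y u + t * ∑ u, c u * d u := by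
    intro t
    rw [Finset.mul_sum, ← Finset.sum_add_distrib]
    refine Finset.sum_congr rfl fun u _ => ?_
    simp; ring
  have c1 := hyM.2 _ hp
  have c2 := hyM.2 _ hm
  rw [hcost] at c1 c2
  have hpM : y + (ε / 2) • d ∈ M := ⟨hp, fun y' hy' => by
    rw [hcost]; have := hyM.2 y' hy'; linarith⟩
  have hmM : y + (-(ε / 2)) • d ∈ M := ⟨hm, fun y' hy' => by
    rw [hcost]; have := hyM.2 y' hy'; linarith⟩
  have hseg : y ∈ openSegment ℝ (y + (ε / 2) • d) (y + (-(ε / 2)) • d) := by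
    refine ⟨1 / 2, 1 / 2, by norm_num, by norm_num, by norm_num, ?_⟩
    ext u
    simp; ring
  have := hext hpM hmM hseg
  apply hd0
  ext u
  have hu := congrFun this u
  simp at hu
  rcases hu with h | h
  · linarith
  · simpa using h
end

section
/- Let F be a finite set partitioned into pairwise disjoint subsets F_1, …, F_ℓ whose union is F, let S_1, …, S_L be pairwise disjoint subsets of F, let k ∈ ℕ and let α_i, β_i ∈ ℕ for i = 1,…,ℓ. Suppose there exists y : F → ℝ such that 0 ≤ y_u ≤ 1 for all u ∈ F, ∑_{u∈F} y_u = k, α_i ≤ ∑_{u∈F_i} y_u ≤ β_i for every i, and ∑_{u∈S_j} y_u ≥ 1 for every j = 1,…,L. Then there exists a subset C ⊆ F with |C| = k such that C ∩ S_j ≠ ∅ for every j = 1,…,L and α_i ≤ |C ∩ F_i| ≤ β_i for every i = 1,…,ℓ. -/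
open Finset in
theorem transport_aux {I J : Type*} [Fintype I] [Fintype J] [DecidableEq I] [DecidableEq J]
    (w : I → J → ℝ) (hw : ∀ i j, 0 ≤ w i j) (a : I → ℕ) (b : J → ℕ)
    (ha : ∀ i, ∑ j, w i j = (a i : ℝ)) (hb : ∀ j, ∑ i, w i j = (b j : ℝ)) :
    ∃ n : I → J → ℕ, (∀ i j, w i j = 0 → n i j = 0) ∧ (∀ i, ∑ j, n i j = a i) ∧
      (∀ j, ∑ i, n i j = b j) := by
  classical
  let t : (Σ i, Fin (a i)) → Finset (Σ j, Fin (b j)) :=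
    fun x => univ.filter (fun p => w x.1 p.1 ≠ 0)
  have hall : ∀ s : Finset (Σ i, Fin (a i)), #s ≤ #(s.biUnion t) := by
    intro s
    let I0 : Finset I := s.image Sigma.fst
    let N : Finset J := univ.filter (fun j => ∃ i ∈ I0, w i j ≠ 0)
    have h1 : s ⊆ I0.sigma (fun _ => univ) := by
      intro x hx
      simp only [mem_sigma, mem_univ, and_true]
      exact mem_image_of_mem _ hx
    have h2 : N.sigma (fun _ => univ) ⊆ s.biUnion t := by
      intro p hp
      simp only [mem_sigma, mem_univ, and_true, N, I0, mem_filter, true_and, mem_image] at hp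
      obtain ⟨i, ⟨x, hx, rfl⟩, h⟩ := hp
      simp only [mem_biUnion, t, mem_filter, mem_univ, true_and]
      exact ⟨x, hx, h⟩
    have c1 := card_le_card h1
    have c2 := card_le_card h2
    simp only [card_sigma, card_univ, Fintype.card_fin] at c1 c2
    have c3 : (∑ i ∈ I0, a i : ℕ) ≤ ∑ j ∈ N, b j := by
      have : ((∑ i ∈ I0, a i : ℕ) : ℝ) ≤ ((∑ j ∈ N, b j : ℕ) : ℝ) := by
        push_cast
        calc ∑ i ∈ I0, (a i : ℝ) = ∑ i ∈ I0, ∑ j ∈ N, w i j := by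
              refine sum_congr rfl fun i hi => ?_
              rw [← ha]
              symm
              apply sum_subset (subset_univ _)
              intro j _ hj
              by_contra h
              exact hj (by simp only [N, mem_filter, mem_univ, true_and]; exact ⟨i, hi, h⟩)
          _ = ∑ j ∈ N, ∑ i ∈ I0, w i j := sum_comm
          _ ≤ ∑ j ∈ N, (b j : ℝ) := by
              refine sum_le_sum fun j _ => ?_
              rw [← hb]
              exact sum_le_sum_of_subset_of_nonneg (subset_univ _) fun i _ _ => hw i j
      exact_mod_cast this
    omega
  obtain ⟨f, finj, hf⟩ := (Finset.all_card_le_biUnion_card_iff_exists_injective t).1 hall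
  have hcard : Fintype.card (Σ i, Fin (a i)) = Fintype.card (Σ j, Fin (b j)) := by
    simp only [Fintype.card_sigma, Fintype.card_fin]
    have : ((∑ i, a i : ℕ) : ℝ) = ((∑ j, b j : ℕ) : ℝ) := by
      push_cast
      simp only [← ha, ← hb]
      exact sum_comm
    exact_mod_cast this
  have fbij : Function.Bijective f :=
    (Fintype.bijective_iff_injective_and_card f).2 ⟨finj, hcard⟩
  refine ⟨fun i j => #(univ.filter (fun x => x.1 = i ∧ (f x).1 = j)), ?_, ?_, ?_⟩
  · intro i j h
    rw [card_eq_zero, filter_eq_empty_iff]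
    rintro x - ⟨rfl, rfl⟩
    have := hf x
    simp only [t, mem_filter, mem_univ, true_and] at this
    exact this h
  · intro i
    have h := card_eq_sum_card_fiberwise (s := univ.filter (fun x : (Σ i, Fin (a i)) => x.1 = i))
      (t := univ) (f := fun x => (f x).1) (fun _ _ => by simp)
    simp only [filter_filter] at h
    rw [← h]
    have : univ.filter (fun x : (Σ i, Fin (a i)) => x.1 = i) = ({i} : Finset I).sigma (fun _ => univ) := by
      ext x; simp
    rw [this, card_sigma]; simp
  · intro j
    have h := card_eq_sum_card_fiberwise (s := univ.filter (fun x : (Σ i, Fin (a i)) => (f x).1 = j))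
      (t := univ) (f := fun x => x.1) (fun _ _ => by simp)
    simp only [filter_filter] at h
    simp only [and_comm (b := (f _).1 = j)]
    rw [← h]
    have h3 : (univ.filter (fun x : (Σ i, Fin (a i)) => (f x).1 = j)).image f
        = ({j} : Finset J).sigma (fun _ => univ) := by
      ext p
      obtain ⟨x, rfl⟩ := fbij.2 p
      simp [finj.eq_iff]
    rw [← card_image_of_injective _ finj, h3, card_sigma]; simp

open Finset in
theorem stmt9 {F : Type*} [Fintype F] [DecidableEq F] (ℓ L k : ℕ)
    (G : Fin ℓ → Finset F) (hGdisj : ∀ i j : Fin ℓ, i ≠ j → Disjoint (G i) (G j))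
    (hGcover : ∀ u : F, ∃ i, u ∈ G i)
    (S : Fin L → Finset F) (hSdisj : ∀ i j : Fin L, i ≠ j → Disjoint (S i) (S j))
    (α β : Fin ℓ → ℕ)
    (hy : ∃ y : F → ℝ, (∀ u, 0 ≤ y u) ∧ (∀ u, y u ≤ 1) ∧ (∑ u, y u = (k : ℝ)) ∧
      (∀ i, (α i : ℝ) ≤ ∑ u ∈ G i, y u ∧ ∑ u ∈ G i, y u ≤ (β i : ℝ)) ∧
      (∀ j, 1 ≤ ∑ u ∈ S j, y u)) :
    ∃ C : Finset F, C.card = k ∧ (∀ j, (C ∩ S j).Nonempty) ∧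
      (∀ i, α i ≤ (C ∩ G i).card ∧ (C ∩ G i).card ≤ β i) := by
  obtain ⟨y, y0, y1, yk, yG, yS⟩ := hy
  choose g hg using hGcover
  have hmem : ∀ u i, u ∈ G i ↔ g u = i := by
    intro u i
    constructor
    · intro h
      by_contra hne
      exact (disjoint_left.1 (hGdisj _ _ hne)) (hg u) h
    · rintro rfl; exact hg u
  have hGf : ∀ i, G i = univ.filter (fun u => g u = i) := by
    intro i; ext u; simp [hmem]
  let YG : Fin ℓ → ℝ := fun i => ∑ u ∈ G i, y u
  let YS : Fin L → ℝ := fun j => ∑ u ∈ S j, y u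
  have yG1 : ∀ i, (α i : ℝ) ≤ YG i := fun i => (yG i).1
  have yG2 : ∀ i, YG i ≤ β i := fun i => (yG i).2
  have yS1 : ∀ j, 1 ≤ YS j := yS
  have YGe : ∀ i, YG i = ∑ u, if g u = i then y u else 0 := by
    intro i; simp only [YG]; rw [hGf, sum_filter]
  have YSe : ∀ j, YS j = ∑ u, if u ∈ S j then y u else 0 := by
    intro j; simp only [YS]; rw [← sum_filter]; simp
  have YGk : ∑ i, YG i = k := by
    simp only [YGe]; rw [sum_comm, ← yk]; simp
  let z : Fin L → F → ℝ := fun j u => if u ∈ S j then y u / YS j else 0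
  have z0 : ∀ j u, 0 ≤ z j u := by
    intro j u; simp only [z]; split_ifs
    · exact div_nonneg (y0 u) (by linarith [yS1 j])
    · exact le_rfl
  have zrow : ∀ j, ∑ u, z j u = 1 := by
    intro j
    have : ∀ u, z j u = (if u ∈ S j then y u else 0) / YS j := by
      intro u; simp only [z]; split_ifs <;> simp
    simp only [this]
    rw [← sum_div, ← YSe]
    exact div_self (by linarith [yS1 j])
  have zcol : ∀ u, ∑ j, z j u ≤ y u := by
    intro u
    by_cases h : ∃ j, u ∈ S j
    · obtain ⟨j, hj⟩ := h
      rw [sum_eq_single j]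
      · simp only [z, if_pos hj]
        exact div_le_self (y0 u) (yS1 j)
      · intro j' _ hne
        simp only [z]
        rw [if_neg]
        exact fun h' => (disjoint_left.1 (hSdisj _ _ hne)) h' hj
      · simp
    · push Not at h
      simp [z, h, y0 u]
  have ztot : ∑ u, ∑ j, z j u = L := by
    rw [sum_comm]; simp [zrow]
  have hLk : L ≤ k := by
    have : (L : ℝ) ≤ k := by
      rw [← ztot, ← yk]; exact sum_le_sum fun u _ => zcol u
    exact_mod_cast this
  have hkβ : k ≤ ∑ i, β i := by
    have : (k : ℝ) ≤ ((∑ i, β i : ℕ) : ℝ) := by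
      rw [← YGk]; push_cast; exact sum_le_sum fun u _ => yG2 u
    exact_mod_cast this
  have hαβ : ∀ i, α i ≤ β i := by
    intro i
    have : (α i : ℝ) ≤ β i := (yG1 i).trans (yG2 i)
    exact_mod_cast this
  -- share of the mandatory slots
  let r : Fin ℓ → ℝ := fun i => (α i : ℝ) / YG i
  have YG0 : ∀ i, 0 ≤ YG i := fun i => (Nat.cast_nonneg _).trans (yG1 i)
  have r0 : ∀ i, 0 ≤ r i := fun i => div_nonneg (Nat.cast_nonneg _) (YG0 i)
  have r1 : ∀ i, r i ≤ 1 := fun i => div_le_one_of_le₀ (yG1 i) (YG0 i)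
  have rY : ∀ i, YG i * r i = α i := by
    intro i
    by_cases h : YG i = 0
    · have := yG1 i
      rw [h] at this ⊢
      have h0 : (α i : ℝ) = 0 := le_antisymm this (Nat.cast_nonneg _)
      simp [h0]
    · simp only [r]; field_simp
  let w : (Fin L ⊕ F) ⊕ (Unit ⊕ Unit) → F ⊕ (Fin ℓ ⊕ Fin ℓ) → ℝ := fun x p =>
    match x, p with
    | .inl (.inl j), .inl u => z j u
    | .inl (.inl _), .inr _ => 0
    | .inl (.inr v), .inl u => if v = u then 1 - y u else 0
    | .inl (.inr v), .inr (.inl i) => if g v = i then y v * r i else 0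
    | .inl (.inr v), .inr (.inr i) => if g v = i then y v * (1 - r i) else 0
    | .inr (.inl _), .inl u => y u - ∑ j, z j u
    | .inr (.inl _), .inr _ => 0
    | .inr (.inr _), .inl _ => 0
    | .inr (.inr _), .inr (.inl _) => 0
    | .inr (.inr _), .inr (.inr i) => β i - YG i
  let a : (Fin L ⊕ F) ⊕ (Unit ⊕ Unit) → ℕ := fun x =>
    match x with
    | .inl _ => 1
    | .inr (.inl _) => k - L
    | .inr (.inr _) => ∑ i, β i - k
  let b : F ⊕ (Fin ℓ ⊕ Fin ℓ) → ℕ := fun p =>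
    match p with
    | .inl _ => 1
    | .inr (.inl i) => α i
    | .inr (.inr i) => β i - α i
  have key : ∀ (i : Fin ℓ) (c : ℝ), (∑ v, if g v = i then y v * c else 0) = YG i * c := by
    intro i c
    rw [YGe, sum_mul]
    refine sum_congr rfl fun v _ => ?_
    split_ifs <;> simp
  obtain ⟨n, n0, nrow, ncol⟩ := transport_aux w (by
      rintro ((j | v) | (_ | _)) (u | (i | i)) <;> simp only [w]
      · exact z0 j u
      · exact le_rfl
      · exact le_rfl
      · split_ifs
        · linarith [y1 u]
        · exact le_rfl
      · split_ifs
        · exact mul_nonneg (y0 _) (r0 _)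
        · exact le_rfl
      · split_ifs
        · exact mul_nonneg (y0 _) (by linarith [r1 i])
        · exact le_rfl
      · linarith [zcol u]
      · exact le_rfl
      · exact le_rfl
      · exact le_rfl
      · exact le_rfl
      · linarith [yG2 i]) a b (by
      rintro ((j | v) | (_ | _)) <;> simp only [Fintype.sum_sum_type, w, a]
      · simp [zrow]
      · simp; ring
      · simp [sum_sub_distrib, ztot, yk, Nat.cast_sub hLk]
      · simp [sum_sub_distrib, YGk, Nat.cast_sub hkβ]) (by
      rintro (u | (i | i)) <;> simp only [Fintype.sum_sum_type, w, b]
      · simp; ring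
      · simp only [key, rY]; simp
      · simp only [key]; rw [mul_sub, rY]; simp [Nat.cast_sub (hαβ i)])
  have rowS : ∀ j, ∑ u, n (.inl (.inl j)) (.inl u) = 1 := by
    intro j
    have := nrow (.inl (.inl j))
    simp only [Fintype.sum_sum_type, a] at this
    have h1 : ∀ q, n (.inl (.inl j)) (.inr q) = 0 := fun q => n0 _ _ rfl
    simpa only [h1, sum_const_zero, add_zero] using this
  have rowFree : ∑ u, n (.inr (.inl ())) (.inl u) = k - L := by
    have := nrow (.inr (.inl ()))
    simp only [Fintype.sum_sum_type, a] at this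
    have h1 : ∀ q, n (.inr (.inl ())) (.inr q) = 0 := fun q => n0 _ _ rfl
    simpa only [h1, sum_const_zero, add_zero] using this
  have rowF : ∀ v, n (.inl (.inr v)) (.inl v) + (n (.inl (.inr v)) (.inr (.inl (g v)))
      + n (.inl (.inr v)) (.inr (.inr (g v)))) = 1 := by
    intro v
    have := nrow (.inl (.inr v))
    simp only [Fintype.sum_sum_type, a] at this
    rwa [Fintype.sum_eq_single v (fun u hu => n0 _ _ (by simp [w, hu.symm])),
      Fintype.sum_eq_single (g v) (fun u hu => n0 _ _ (by simp [w, hu.symm])),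
      Fintype.sum_eq_single (g v) (fun u hu => n0 _ _ (by simp [w, hu.symm]))] at this
  have colF : ∀ u, (∑ j, n (.inl (.inl j)) (.inl u)) + n (.inl (.inr u)) (.inl u)
      + n (.inr (.inl ())) (.inl u) = 1 := by
    intro u
    have := ncol (.inl u)
    simp only [Fintype.sum_sum_type, b] at this
    rw [Fintype.sum_eq_single u (fun v hu => n0 _ _ (by simp [w, hu]))] at this
    simp only [univ_unique, sum_singleton] at this
    have h0 : n (.inr (.inr ())) (.inl u) = 0 := n0 _ _ rfl
    rw [← this]
    simp [h0]
  have colM : ∀ i, ∑ v ∈ G i, n (.inl (.inr v)) (.inr (.inl i)) = α i := by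
    intro i
    have := ncol (.inr (.inl i))
    simp only [Fintype.sum_sum_type, b] at this
    have h1 : ∀ j, n (.inl (.inl j)) (.inr (.inl i)) = 0 := fun q => n0 _ _ rfl
    have h2 : ∀ j, n (.inr (.inl j)) (.inr (.inl i)) = 0 := fun q => n0 _ _ rfl
    have h3 : ∀ j, n (.inr (.inr j)) (.inr (.inl i)) = 0 := fun q => n0 _ _ rfl
    simp only [h1, h2, h3, sum_const_zero, add_zero, zero_add] at this
    rw [sum_subset (subset_univ (G i)) (fun v _ hv => n0 _ _ (by
      rw [hmem] at hv; simp [w, hv]))]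
    omega
  have colO : ∀ i, ∑ v ∈ G i, n (.inl (.inr v)) (.inr (.inr i)) ≤ β i - α i := by
    intro i
    have := ncol (.inr (.inr i))
    simp only [Fintype.sum_sum_type, b] at this
    rw [sum_subset (subset_univ (G i)) (fun v _ hv => n0 _ _ (by
      rw [hmem] at hv; simp [w, hv]))]
    omega
  let C : Finset F := univ.filter (fun u => n (.inl (.inr u)) (.inl u) = 0)
  have hC : ∀ u, (if u ∈ C then 1 else 0) + n (.inl (.inr u)) (.inl u) = 1 := by
    intro u
    have := rowF u
    simp only [C, mem_filter, mem_univ, true_and]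
    split_ifs <;> omega
  refine ⟨C, ?_, ?_, ?_⟩
  · have e1 : C.card = ∑ u, if u ∈ C then 1 else 0 := by simp
    have e2 := sum_congr (rfl : (univ : Finset F) = univ) (fun u _ => hC u)
    have e3 := sum_congr (rfl : (univ : Finset F) = univ) (fun u _ => colF u)
    rw [sum_add_distrib] at e2
    rw [sum_add_distrib, sum_add_distrib, sum_comm, rowFree] at e3
    simp only [rowS, sum_const, card_univ, Fintype.card_fin, smul_eq_mul, mul_one] at e2 e3
    omega
  · intro j
    obtain ⟨u, -, hu⟩ := exists_ne_zero_of_sum_ne_zero (by rw [rowS j]; exact one_ne_zero)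
    refine ⟨u, mem_inter.2 ⟨?_, ?_⟩⟩
    · simp only [C, mem_filter, mem_univ, true_and]
      have h1 := colF u
      have h2 := single_le_sum (f := fun j => n (.inl (.inl j)) (.inl u))
        (fun _ _ => Nat.zero_le _) (mem_univ j)
      omega
    · by_contra h
      exact hu (n0 _ _ (by simp [w, z, h]))
  · intro i
    have e : (C ∩ G i).card = ∑ v ∈ G i, (n (.inl (.inr v)) (.inr (.inl i))
        + n (.inl (.inr v)) (.inr (.inr i))) := by
      rw [inter_comm, ← filter_mem_eq_inter, card_filter]
      refine sum_congr rfl fun v hv => ?_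
      rw [hmem] at hv
      subst hv
      have h1 := hC v
      have h2 := rowF v
      omega
    rw [sum_add_distrib, colM] at e
    have h1 := colO i
    have h2 := hαβ i
    omega
end

section
/- Let (P,d) be a finite metric space, let p ≥ 1 be a real number, let w : P → ℝ be nonnegative demands, let P_1, …, P_ℓ be pairwise disjoint subsets of P whose union is P, and let k, α_1, …, α_ℓ, β_1, …, β_ℓ be natural numbers. Call C ⊆ P feasible if |C| = k and α_i ≤ |C ∩ P_i| ≤ β_i for every i; for nonempty C define cost(C) := ∑_{v∈P} w(v)·d(v,C)^p where d(v,C) := min_{c∈C} d(v,c). Let D ⊆ P be nonempty, let nn : P → D satisfy d(v, nn(v)) = d(v,D) for every v ∈ P, and define cost_rdc(X) := ∑_{v∈P} w(v)·d(nn(v), X)^p for nonempty X ⊆ P. Let α, β ≥ 1 be real numbers. Suppose that cost over D satisfies ∑_{v∈P} w(v)·d(v,D)^p ≤ α^p·cost(C) for every feasible C, and that S is a feasible set with cost_rdc(S) ≤ β^p·cost_rdc(C) for every feasible C. Then for every feasible C, cost(S) ≤ 2^{p-1}·(α^p + β^p·2^{p-1}·(α^p + 1))·cost(C). -/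
open Metric

theorem aux_rpow (p : ℝ) (hp : 1 ≤ p) (x y : ℝ) (hx : 0 ≤ x) (hy : 0 ≤ y) :
    (x + y) ^ p ≤ 2 ^ (p - 1) * (x ^ p + y ^ p) := by
  have := NNReal.rpow_add_le_mul_rpow_add_rpow ⟨x, hx⟩ ⟨y, hy⟩ hp
  exact_mod_cast this

theorem aux_sum {M : Type*} [MetricSpace M] [Fintype M]
    (p : ℝ) (hp : 1 ≤ p) (w : M → ℝ) (hw : ∀ v, 0 ≤ w v) (X : Set M)
    (f g : M → M) (r : M → ℝ) (hr : ∀ v, dist (f v) (g v) = r v) :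
    ∑ v, w v * infDist (f v) X ^ p ≤
      2 ^ (p - 1) * (∑ v, w v * r v ^ p + ∑ v, w v * infDist (g v) X ^ p) := by
  rw [← Finset.sum_add_distrib, Finset.mul_sum]
  refine Finset.sum_le_sum fun v _ => ?_
  have h1 : infDist (f v) X ≤ infDist (g v) X + r v := by
    rw [← hr]; exact infDist_le_infDist_add_dist
  have h0 : 0 ≤ r v := by rw [← hr]; exact dist_nonneg
  have h2 := (Real.rpow_le_rpow infDist_nonneg h1 (by linarith)).trans
    (aux_rpow p hp _ _ infDist_nonneg h0)
  calc _ ≤ w v * (2 ^ (p - 1) * (infDist (g v) X ^ p + r v ^ p)) :=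
        mul_le_mul_of_nonneg_left h2 (hw v)
    _ = _ := by ring

theorem stmt10 {M : Type*} [MetricSpace M] [Fintype M] [DecidableEq M]
    (p : ℝ) (hp : 1 ≤ p)
    (w : M → ℝ) (hw : ∀ v, 0 ≤ w v)
    (ℓ : ℕ) (P : Fin ℓ → Finset M)
    (hPdisj : ∀ i j : Fin ℓ, i ≠ j → Disjoint (P i) (P j))
    (hPcover : ∀ v : M, ∃ i, v ∈ P i)
    (k : ℕ) (a b : Fin ℓ → ℕ)
    (D : Finset M) (hD : D.Nonempty)
    (nn : M → M) (hnnD : ∀ v, nn v ∈ D)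
    (hnn : ∀ v, dist v (nn v) = infDist v (D : Set M))
    (α β : ℝ) (hα : 1 ≤ α) (hβ : 1 ≤ β)
    (S : Finset M)
    (hSfeas : S.card = k ∧ ∀ i, a i ≤ (S ∩ P i).card ∧ (S ∩ P i).card ≤ b i)
    (hDapx : ∀ C : Finset M,
      (C.card = k ∧ ∀ i, a i ≤ (C ∩ P i).card ∧ (C ∩ P i).card ≤ b i) →
      ∑ v, w v * infDist v (D : Set M) ^ p ≤
        α ^ p * ∑ v, w v * infDist v (C : Set M) ^ p)
    (hSapx : ∀ C : Finset M,
      (C.card = k ∧ ∀ i, a i ≤ (C ∩ P i).card ∧ (C ∩ P i).card ≤ b i) →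
      ∑ v, w v * infDist (nn v) (S : Set M) ^ p ≤
        β ^ p * ∑ v, w v * infDist (nn v) (C : Set M) ^ p) :
    ∀ C : Finset M,
      (C.card = k ∧ ∀ i, a i ≤ (C ∩ P i).card ∧ (C ∩ P i).card ≤ b i) →
      ∑ v, w v * infDist v (S : Set M) ^ p ≤
        2 ^ (p - 1) * (α ^ p + β ^ p * 2 ^ (p - 1) * (α ^ p + 1)) *
          ∑ v, w v * infDist v (C : Set M) ^ p := by
  intro C hC
  have hA := aux_sum p hp w hw (S : Set M) (fun v => v) nn _ hnn
  have hB := aux_sum p hp w hw (C : Set M) nn (fun v => v) _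
    (fun v => (dist_comm _ _).trans (hnn v))
  have hD' := hDapx C hC
  have hS' := hSapx C hC
  have h2 : (0 : ℝ) ≤ 2 ^ (p - 1) := by positivity
  have hb : 0 ≤ β ^ p := by positivity
  generalize (2 : ℝ) ^ (p - 1) = t at *
  calc _ ≤ _ := hA
    _ ≤ t * (α ^ p * ∑ v, w v * infDist v (C : Set M) ^ p +
        β ^ p * (t * (α ^ p * ∑ v, w v * infDist v (C : Set M) ^ p +
          ∑ v, w v * infDist v (C : Set M) ^ p))) := by
      refine mul_le_mul_of_nonneg_left (add_le_add hD' (hS'.trans ?_)) h2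
      refine mul_le_mul_of_nonneg_left (hB.trans ?_) hb
      exact mul_le_mul_of_nonneg_left (by linarith) h2
    _ = _ := by ring
end

section
/- Let (M,d) be a metric space, let P ⊆ M be finite, let w : P → ℝ be nonnegative, and let p ≥ 1 be a real number. Let D, X ⊆ M be finite and nonempty, and let nn : P → D satisfy d(v, nn(v)) = min_{q∈D} d(v,q) for every v ∈ P. Then ∑_{v∈P} w(v)·d(v, X)^p ≤ 2^{p-1}·(∑_{v∈P} w(v)·d(v,D)^p + ∑_{v∈P} w(v)·d(nn(v), X)^p), where d(v,Y) := min_{y∈Y} d(v,y). -/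
open Metric

theorem stmt12 {M : Type*} [MetricSpace M] (p : ℝ) (hp : 1 ≤ p)
    (P : Finset M) (w : M → ℝ) (hw : ∀ v ∈ P, 0 ≤ w v)
    (D X : Finset M) (hD : D.Nonempty) (hX : X.Nonempty)
    (nn : M → M) (hnnD : ∀ v ∈ P, nn v ∈ D)
    (hnn : ∀ v ∈ P, dist v (nn v) = infDist v (D : Set M)) :
    ∑ v ∈ P, w v * infDist v (X : Set M) ^ p ≤
      2 ^ (p - 1) * (∑ v ∈ P, w v * infDist v (D : Set M) ^ p +
        ∑ v ∈ P, w v * infDist (nn v) (X : Set M) ^ p) := by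
  rw [← Finset.sum_add_distrib, Finset.mul_sum]
  refine Finset.sum_le_sum fun v hv => ?_
  have ha : 0 ≤ infDist v (D : Set M) := infDist_nonneg
  have hb : 0 ≤ infDist (nn v) (X : Set M) := infDist_nonneg
  have h1 : infDist v (X : Set M) ≤ infDist v (D : Set M) + infDist (nn v) (X : Set M) := by
    rw [← hnn v hv, add_comm]
    exact infDist_le_infDist_add_dist
  have h2 : (infDist v (D : Set M) + infDist (nn v) (X : Set M)) ^ p ≤
      2 ^ (p - 1) * (infDist v (D : Set M) ^ p + infDist (nn v) (X : Set M) ^ p) := by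
    have h := NNReal.rpow_add_le_mul_rpow_add_rpow ⟨_, ha⟩ ⟨_, hb⟩ hp
    exact_mod_cast h
  have h3 := (Real.rpow_le_rpow infDist_nonneg h1 (by linarith : 0 ≤ p)).trans h2
  calc _ ≤ w v * _ := mul_le_mul_of_nonneg_left h3 (hw v hv)
    _ = _ := by ring
end

section
/- Let (M,d) be a metric space, let D ⊆ M be finite, let w, R : D → ℝ be nonnegative, let p ≥ 1 be a real number, let f : D → D satisfy d(v, f(v)) ≤ 2^{1+1/p}·R(v) for every v ∈ D, and let C ⊆ M be finite and nonempty. Then ∑_{v∈D} w(v)·d(v,C)^p ≤ 4^p·∑_{v∈D} w(v)·R(v)^p + 2^{p-1}·∑_{v∈D} w(v)·d(f(v), C)^p, where d(v,C) := min_{c∈C} d(v,c). -/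
open Metric

theorem stmt13 {M : Type*} [MetricSpace M] (p : ℝ) (hp : 1 ≤ p)
    (D : Finset M) (w R : M → ℝ) (hw : ∀ v ∈ D, 0 ≤ w v) (hR : ∀ v ∈ D, 0 ≤ R v)
    (f : M → M) (hfD : ∀ v ∈ D, f v ∈ D)
    (hf : ∀ v ∈ D, dist v (f v) ≤ 2 ^ (1 + 1 / p) * R v)
    (C : Finset M) (hC : C.Nonempty) :
    ∑ v ∈ D, w v * infDist v (C : Set M) ^ p ≤
      4 ^ p * ∑ v ∈ D, w v * R v ^ p +
        2 ^ (p - 1) * ∑ v ∈ D, w v * infDist (f v) (C : Set M) ^ p := by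
  have hp0 : 0 < p := by linarith
  rw [Finset.mul_sum, Finset.mul_sum, ← Finset.sum_add_distrib]
  refine Finset.sum_le_sum fun v hv => ?_
  have hb : 0 ≤ infDist (f v) (C : Set M) := infDist_nonneg
  have hRv := hR v hv
  have h1 : infDist v (C : Set M) ≤ dist v (f v) + infDist (f v) (C : Set M) := by
    rw [add_comm]
    exact infDist_le_infDist_add_dist
  have h2 : infDist v (C : Set M) ^ p ≤ (dist v (f v) + infDist (f v) (C : Set M)) ^ p :=
    Real.rpow_le_rpow infDist_nonneg h1 hp0.le
  have h3 : (dist v (f v) + infDist (f v) (C : Set M)) ^ p ≤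
      2 ^ (p - 1) * (dist v (f v) ^ p + infDist (f v) (C : Set M) ^ p) := by
    have := NNReal.rpow_add_le_mul_rpow_add_rpow ⟨dist v (f v), dist_nonneg⟩
      ⟨infDist (f v) (C : Set M), hb⟩ hp
    exact_mod_cast this
  have h4 : dist v (f v) ^ p ≤ 2 ^ (p + 1) * R v ^ p := by
    have h := Real.rpow_le_rpow dist_nonneg (hf v hv) hp0.le
    rw [Real.mul_rpow (by positivity) hRv, ← Real.rpow_mul (by norm_num)] at h
    have e : (1 + 1 / p) * p = p + 1 := by field_simp
    rwa [e] at h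
  have h5 : (2 : ℝ) ^ (p - 1) * 2 ^ (p + 1) = 4 ^ p := by
    rw [← Real.rpow_add (by norm_num), show (4 : ℝ) = 2 ^ (2 : ℝ) by norm_num,
      ← Real.rpow_mul (by norm_num)]
    congr 1
    ring
  have h6 : infDist v (C : Set M) ^ p ≤
      4 ^ p * R v ^ p + 2 ^ (p - 1) * infDist (f v) (C : Set M) ^ p := by
    have h7 := mul_le_mul_of_nonneg_left h4 (by positivity : (0 : ℝ) ≤ 2 ^ (p - 1))
    rw [← mul_assoc, h5] at h7
    rw [mul_add] at h3
    linarith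
  have h8 := mul_le_mul_of_nonneg_left h6 (hw v hv)
  linarith
end

section
/- Let F be a finite set, let P ⊆ F, let p ≥ 1 and δ ≥ 0 be real numbers, and let x, y, d : F → ℝ be nonnegative functions. Assume: ∑_{u∈F} x_u = 1; x_u = y_u for every u ∈ P; and d_u ≥ δ/2 for every u ∉ P with x_u > 0. Then ∑_{u∈F} d_u^p · x_u ≥ 2^{-p}·((1 − ∑_{u∈P} y_u)·δ^p + ∑_{u∈P} d_u^p · y_u). -/
theorem stmt14 {F : Type*} [Fintype F] (P : Finset F)
    (p δ : ℝ) (hp : 1 ≤ p) (hδ : 0 ≤ δ)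
    (x y d : F → ℝ) (hx : ∀ u, 0 ≤ x u) (hy : ∀ u, 0 ≤ y u) (hd : ∀ u, 0 ≤ d u)
    (hxsum : ∑ u, x u = 1)
    (hxy : ∀ u ∈ P, x u = y u)
    (hfar : ∀ u ∉ P, 0 < x u → δ / 2 ≤ d u) :
    2 ^ (-p) * ((1 - ∑ u ∈ P, y u) * δ ^ p + ∑ u ∈ P, d u ^ p * y u) ≤
      ∑ u, d u ^ p * x u := by
  classical
  have h1 : ∑ u ∈ P, y u = ∑ u ∈ P, x u :=
    Finset.sum_congr rfl fun u hu => (hxy u hu).symm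
  have h2 : ∑ u ∈ P, d u ^ p * y u = ∑ u ∈ P, d u ^ p * x u :=
    Finset.sum_congr rfl fun u hu => by rw [hxy u hu]
  have h3 : 1 - ∑ u ∈ P, x u = ∑ u ∈ Pᶜ, x u := by
    rw [← hxsum, ← Finset.sum_add_sum_compl P x]; ring
  have hc : (2 : ℝ) ^ (-p) ≤ 1 :=
    Real.rpow_le_one_of_one_le_of_nonpos (by norm_num) (by linarith)
  have h4 : (2 : ℝ) ^ (-p) * δ ^ p = (δ / 2) ^ p := by
    rw [Real.div_rpow hδ (by norm_num), Real.rpow_neg (by norm_num)]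
    ring
  have hA : (∑ u ∈ Pᶜ, x u) * (δ / 2) ^ p ≤ ∑ u ∈ Pᶜ, d u ^ p * x u := by
    rw [Finset.sum_mul]
    refine Finset.sum_le_sum fun u hu => ?_
    rcases (hx u).eq_or_lt with h | h
    · simp [← h]
    · rw [mul_comm]
      exact mul_le_mul_of_nonneg_right
        (Real.rpow_le_rpow (by linarith) (hfar u (Finset.mem_compl.mp hu) h) (by linarith)) h.le
  have hB : 0 ≤ ∑ u ∈ P, d u ^ p * x u :=
    Finset.sum_nonneg fun u _ => mul_nonneg (Real.rpow_nonneg (hd u) p) (hx u)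
  rw [h1, h2, h3, ← Finset.sum_add_sum_compl P (fun u => d u ^ p * x u)]
  have hC := mul_le_mul_of_nonneg_right hc hB
  rw [← h4] at hA
  linarith
end

section
/- Let F be a finite set, let P ⊆ F, let p ≥ 1 and δ ≥ 0 be real numbers, and let x, y, d : F → ℝ be nonnegative functions. Assume: ∑_{u∈F} x_u = 1; x_u = y_u for every u ∈ P; and d_u ≤ (3/2)·δ for every u ∉ P with x_u > 0. Then ∑_{u∈F} d_u^p · x_u ≤ (3/2)^p·((1 − ∑_{u∈P} y_u)·δ^p + ∑_{u∈P} d_u^p · y_u). -/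
theorem stmt15 {F : Type*} [Fintype F] (P : Finset F)
    (p δ : ℝ) (hp : 1 ≤ p) (hδ : 0 ≤ δ)
    (x y d : F → ℝ) (hx : ∀ u, 0 ≤ x u) (hy : ∀ u, 0 ≤ y u) (hd : ∀ u, 0 ≤ d u)
    (hxsum : ∑ u, x u = 1)
    (hxy : ∀ u ∈ P, x u = y u)
    (hnear : ∀ u ∉ P, 0 < x u → d u ≤ (3 / 2) * δ) :
    ∑ u, d u ^ p * x u ≤
      (3 / 2) ^ p * ((1 - ∑ u ∈ P, y u) * δ ^ p + ∑ u ∈ P, d u ^ p * y u) := by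
  classical
  have hP : ∑ u ∈ P, y u = ∑ u ∈ P, x u :=
    Finset.sum_congr rfl fun u hu => (hxy u hu).symm
  have hPd : ∑ u ∈ P, d u ^ p * y u = ∑ u ∈ P, d u ^ p * x u :=
    Finset.sum_congr rfl fun u hu => by rw [hxy u hu]
  have hc : 1 - ∑ u ∈ P, x u = ∑ u ∈ Pᶜ, x u := by
    rw [← hxsum, ← Finset.sum_add_sum_compl P x]; ring
  rw [hP, hPd, hc, ← Finset.sum_add_sum_compl P (fun u => d u ^ p * x u)]
  have h1 : (1 : ℝ) ≤ (3 / 2 : ℝ) ^ p :=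
    Real.one_le_rpow (by norm_num) (by linarith)
  have h2 : 0 ≤ ∑ u ∈ P, d u ^ p * x u :=
    Finset.sum_nonneg fun u _ => mul_nonneg (Real.rpow_nonneg (hd u) p) (hx u)
  have h3 : ∑ u ∈ Pᶜ, d u ^ p * x u ≤ (3 / 2 : ℝ) ^ p * ((∑ u ∈ Pᶜ, x u) * δ ^ p) := by
    rw [Finset.sum_mul, Finset.mul_sum]
    refine Finset.sum_le_sum fun u hu => ?_
    rcases (hx u).eq_or_lt with h0 | h0
    · simp [← h0]
    · have h4 : d u ^ p ≤ (3 / 2 * δ) ^ p :=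
        Real.rpow_le_rpow (hd u) (hnear u (by simpa using hu) h0) (by linarith)
      rw [Real.mul_rpow (by norm_num) hδ] at h4
      have h5 := mul_le_mul_of_nonneg_right h4 h0.le
      linarith
  have h6 := mul_le_mul_of_nonneg_right h1 h2
  rw [mul_add]
  linarith
end

section
/- Let (M,d) be a metric space, let p ≥ 1 be a real number, let F ⊆ M be finite, and let D' ⊆ M be finite with |D'| ≥ 2. Let R : D' → ℝ be nonnegative and assume the well-separatedness condition: for all distinct v, v̄ ∈ D', d(v,v̄) ≥ 2^{1+1/p}·max(R(v), R(v̄)). For v ∈ D' define B(v) := {u ∈ F : d(v,u) ≤ 2^{1/p}·R(v)}, and let {P(v)}_{v∈D'} be pairwise disjoint subsets of F with B(v) ⊆ P(v) for every v. Let w : D' → ℝ be nonnegative, and for each v ∈ D' let v' ∈ D' \ {v} satisfy d(v,v') = min_{q∈D', q≠v} d(v,q); define Δ_y(v) := (1 − ∑_{u∈P(v)} y_u)·d(v,v')^p + ∑_{u∈P(v)} d(v,u)^p·y_u. Then for every nonnegative y : F → ℝ satisfying ∑_{u∈B(v)} y_u ≥ 1/2 and ∑_{u∈P(v)} y_u ≤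 1 for all v ∈ D', there exists a nonnegative x : D' × F → ℝ such that for every v ∈ D': ∑_{u∈F} x(v,u) = 1 and x(v,u) ≤ y_u for every u ∈ F, and moreover ∑_{v∈D'} w(v)·∑_{u∈F} d(v,u)^p·x(v,u) ≤ (3/2)^p·∑_{v∈D'} w(v)·Δ_y(v). -/
theorem stmt16 {M : Type*} [MetricSpace M] (p : ℝ) (hp : 1 ≤ p)
    (F D' : Finset M) (hD' : 2 ≤ D'.card)
    (R : M → ℝ) (hR : ∀ v ∈ D', 0 ≤ R v)
    (hsep : ∀ v ∈ D', ∀ vb ∈ D', v ≠ vb →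
      dist v vb ≥ 2 ^ (1 + 1 / p) * max (R v) (R vb))
    (B : M → Finset M)
    (hB : ∀ v ∈ D', ∀ u : M, u ∈ B v ↔ u ∈ F ∧ dist v u ≤ 2 ^ (1 / p) * R v)
    (P : M → Finset M) (hPF : ∀ v ∈ D', P v ⊆ F)
    (hBP : ∀ v ∈ D', B v ⊆ P v)
    (hPdisj : ∀ v ∈ D', ∀ vb ∈ D', v ≠ vb → Disjoint (P v) (P vb))
    (w : M → ℝ) (hw : ∀ v ∈ D', 0 ≤ w v)
    (nn : M → M)
    (hnn : ∀ v ∈ D', nn v ∈ D' ∧ nn v ≠ v ∧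
      ∀ q ∈ D', q ≠ v → dist v (nn v) ≤ dist v q) :
    ∀ y : M → ℝ, (∀ u ∈ F, 0 ≤ y u) →
      (∀ v ∈ D', 1 / 2 ≤ ∑ u ∈ B v, y u) →
      (∀ v ∈ D', ∑ u ∈ P v, y u ≤ 1) →
      ∃ x : M → M → ℝ,
        (∀ v ∈ D', ∀ u ∈ F, 0 ≤ x v u) ∧
        (∀ v ∈ D', ∑ u ∈ F, x v u = 1) ∧
        (∀ v ∈ D', ∀ u ∈ F, x v u ≤ y u) ∧
        ∑ v ∈ D', w v * ∑ u ∈ F, dist v u ^ p * x v u ≤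
          (3 / 2) ^ p * ∑ v ∈ D', w v *
            ((1 - ∑ u ∈ P v, y u) * dist v (nn v) ^ p +
              ∑ u ∈ P v, dist v u ^ p * y u) := by
  classical
  intro y hy hyB hyP
  have hBF : ∀ v ∈ D', B v ⊆ F := fun v hv => (hBP v hv).trans (hPF v hv)
  have hhalf : ∀ v ∈ D', 1 / 2 ≤ ∑ u ∈ P v, y u := fun v hv =>
    (hyB v hv).trans (Finset.sum_le_sum_of_subset_of_nonneg (hBP v hv)
      (fun u hu _ => hy u (hPF v hv hu)))
  have hsum : ∀ v ∈ D', ∀ g : M → ℝ, ∀ c : ℝ,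
      ∑ u ∈ F, g u * ((if u ∈ P v then y u else 0) + (if u ∈ B (nn v) then y u * c else 0))
      = ∑ u ∈ P v, g u * y u + ∑ u ∈ B (nn v), g u * (y u * c) := by
    intro v hv g c
    simp only [mul_add, mul_ite, mul_zero, Finset.sum_add_distrib]
    rw [← Finset.sum_filter, ← Finset.sum_filter, Finset.filter_mem_eq_inter,
      Finset.filter_mem_eq_inter, Finset.inter_eq_right.2 (hPF v hv),
      Finset.inter_eq_right.2 (hBF _ (hnn v hv).1)]
  refine ⟨fun v u => (if u ∈ P v then y u else 0) + (if u ∈ B (nn v) then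
    y u * ((1 - ∑ u ∈ P v, y u) / ∑ u ∈ B (nn v), y u) else 0), ?_, ?_, ?_, ?_⟩
  · intro v hv u hu
    have h1 := hyP v hv
    have h2 := hyB _ (hnn v hv).1
    have h3 := hy u hu
    have h4 : 0 ≤ (1 - ∑ u ∈ P v, y u) / ∑ u ∈ B (nn v), y u :=
      div_nonneg (by linarith) (by linarith)
    have h5 := mul_nonneg h3 h4
    dsimp only
    split_ifs <;> linarith
  · intro v hv
    have h2 := hyB _ (hnn v hv).1
    have := hsum v hv (fun _ => 1) ((1 - ∑ u ∈ P v, y u) / ∑ u ∈ B (nn v), y u)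
    simp only [one_mul] at this
    rw [this, ← Finset.sum_mul, mul_div_cancel₀ _ (by linarith)]
    ring
  · intro v hv u hu
    have h1 := hhalf v hv
    have h2 := hyB _ (hnn v hv).1
    have h3 := hy u hu
    have h4 : (1 - ∑ u ∈ P v, y u) / ∑ u ∈ B (nn v), y u ≤ 1 := by
      rw [div_le_one (by linarith)]; linarith
    have h5 := mul_le_mul_of_nonneg_left h4 h3
    have h6 : u ∈ P v → u ∈ B (nn v) → False := fun ha hb =>
      Finset.disjoint_left.1 (hPdisj v hv _ (hnn v hv).1 (hnn v hv).2.1.symm) ha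
        (hBP _ (hnn v hv).1 hb)
    dsimp only
    split_ifs with ha hb
    · exact (h6 ha hb).elim
    all_goals linarith
  · rw [Finset.mul_sum]
    refine Finset.sum_le_sum fun v hv => ?_
    rw [hsum v hv, mul_left_comm]
    refine mul_le_mul_of_nonneg_left ?_ (hw v hv)
    obtain ⟨hn1, hn2, -⟩ := hnn v hv
    have h1 := hyP v hv
    have h2 := hyB _ hn1
    set s := 1 - ∑ u ∈ P v, y u with hs
    set T := ∑ u ∈ B (nn v), y u with hT
    have hs0 : 0 ≤ s := by linarith
    have hc : 0 ≤ s / T := div_nonneg hs0 (by linarith)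
    have hone : (1:ℝ) ≤ (3 / 2) ^ p := Real.one_le_rpow (by norm_num) (by linarith)
    have hA : 0 ≤ ∑ u ∈ P v, dist v u ^ p * y u := Finset.sum_nonneg fun u hu =>
      mul_nonneg (Real.rpow_nonneg dist_nonneg _) (hy u (hPF v hv hu))
    have hBb : ∑ u ∈ B (nn v), dist v u ^ p * (y u * (s / T)) ≤
        (3 / 2) ^ p * (s * dist v (nn v) ^ p) := by
      calc _ ≤ ∑ u ∈ B (nn v), ((3 / 2) ^ p * dist v (nn v) ^ p) * (y u * (s / T)) := by
            refine Finset.sum_le_sum fun u hu => ?_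
            refine mul_le_mul_of_nonneg_right ?_ (mul_nonneg (hy u (hBF _ hn1 hu)) hc)
            rw [← Real.mul_rpow (by norm_num) dist_nonneg]
            refine Real.rpow_le_rpow dist_nonneg ?_ (by linarith)
            have e1 := ((hB _ hn1 u).1 hu).2
            have e2 := hsep v hv _ hn1 hn2.symm
            have e3 := dist_triangle v (nn v) u
            rw [Real.rpow_add (by norm_num), Real.rpow_one] at e2
            have e4 : (2:ℝ) ^ (1 / p) * R (nn v) ≤ 2 ^ (1 / p) * max (R v) (R (nn v)) :=
              mul_le_mul_of_nonneg_left (le_max_right _ _) (by positivity)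
            linarith
        _ = _ := by
            rw [← Finset.mul_sum, ← Finset.sum_mul, ← hT, mul_div_cancel₀ _ (by linarith)]
            ring
    nlinarith [mul_nonneg (sub_nonneg.2 hone) hA]
end

section
/- Let (M,d) be a metric space, let p ≥ 1 be a real number, let I be a finite set, let v : I → M, let w : I → ℝ be nonnegative, and for each i ∈ I let u₁(i), u₂(i) ∈ M; set S_i := {u₁(i), u₂(i)} and R_i := (1/2)·(d(v_i, u₁(i))^p + d(v_i, u₂(i))^p). Let Ī ⊆ I be such that for every i ∈ I, either i ∈ Ī or there exists j ∈ Ī with S_i ∩ S_j ≠ ∅ and R_j ≤ R_i. Let C ⊆ M be finite and nonempty with C ∩ S_j ≠ ∅ for every j ∈ Ī. Then ∑_{i∈I} w_i·d(v_i, C)^p ≤ 2·3^p·∑_{i∈I} w_i·R_i, where d(v,C) := min_{c∈C} d(v,c). -/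
open Metric

theorem stmt17 {M : Type*} [MetricSpace M] (p : ℝ) (hp : 1 ≤ p)
    {I : Type*} [Fintype I] (v : I → M) (w : I → ℝ) (hw : ∀ i, 0 ≤ w i)
    (u₁ u₂ : I → M)
    (S : I → Set M) (hS : ∀ i, S i = {u₁ i, u₂ i})
    (R : I → ℝ)
    (hR : ∀ i, R i = (1 / 2) * (dist (v i) (u₁ i) ^ p + dist (v i) (u₂ i) ^ p))
    (Ibar : Finset I)
    (hIbar : ∀ i : I, i ∈ Ibar ∨ ∃ j ∈ Ibar, (S i ∩ S j).Nonempty ∧ R j ≤ R i)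
    (C : Finset M) (hC : C.Nonempty)
    (hCS : ∀ j ∈ Ibar, ((C : Set M) ∩ S j).Nonempty) :
    ∑ i, w i * infDist (v i) (C : Set M) ^ p ≤ 2 * 3 ^ p * ∑ i, w i * R i := by
  have hp0 : 0 < p := by linarith
  have hR0 : ∀ i, 0 ≤ R i := fun i => by rw [hR]; positivity
  have key : ∀ i, ∀ s ∈ S i, dist (v i) s ≤ (2 * R i) ^ (1 / p) := by
    intro i s hs
    have h1 : 0 ≤ dist (v i) (u₁ i) ^ p := by positivity
    have h2 : 0 ≤ dist (v i) (u₂ i) ^ p := by positivity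
    have h : dist (v i) s ^ p ≤ 2 * R i := by
      rw [hS] at hs
      rw [hR]
      rcases hs with rfl | hs
      · linarith
      · rw [Set.mem_singleton_iff] at hs
        subst hs
        linarith
    have h3 := Real.rpow_le_rpow (by positivity) h (by positivity : 0 ≤ 1 / p)
    rwa [one_div, Real.rpow_rpow_inv dist_nonneg hp0.ne', ← one_div] at h3
  have main : ∀ i, infDist (v i) (C : Set M) ^ p ≤ 2 * 3 ^ p * R i := by
    intro i
    have h2R : 0 ≤ 2 * R i := by linarith [hR0 i]
    have hr0 : 0 ≤ (2 * R i) ^ (1 / p) := by positivity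
    have hb : infDist (v i) (C : Set M) ≤ 3 * (2 * R i) ^ (1 / p) := by
      rcases hIbar i with hi | ⟨j, hj, ⟨s, hsi, hsj⟩, hle⟩
      · obtain ⟨c, hc, hcs⟩ := hCS i hi
        have := infDist_le_dist_of_mem (x := v i) hc
        linarith [key i c hcs]
      · obtain ⟨c, hc, hcs⟩ := hCS j hj
        have h0 := infDist_le_dist_of_mem (x := v i) hc
        have h1 := key i s hsi
        have h2 := key j s hsj
        have h3 := key j c hcs
        have h4 : (2 * R j) ^ (1 / p) ≤ (2 * R i) ^ (1 / p) :=
          Real.rpow_le_rpow (by linarith [hR0 j]) (by linarith) (by positivity)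
        have h5 := dist_triangle4 (v i) s (v j) c
        rw [dist_comm s (v j)] at h5
        linarith
    calc infDist (v i) (C : Set M) ^ p ≤ (3 * (2 * R i) ^ (1 / p)) ^ p :=
          Real.rpow_le_rpow infDist_nonneg hb hp0.le
      _ = 2 * 3 ^ p * R i := by
          rw [Real.mul_rpow (by norm_num) hr0, one_div, Real.rpow_inv_rpow h2R hp0.ne']
          ring
  rw [Finset.mul_sum]
  refine Finset.sum_le_sum fun i _ => ?_
  have := mul_le_mul_of_nonneg_left (main i) (hw i)
  linarith
end

section
/- Let F be a finite type, let ℓ ≥ 1, and let P_1, …, P_ℓ be pairwise disjoint subsets of F whose union is F. Let k, α_1, …, α_ℓ, β_1, …, β_ℓ be natural numbers with α_i ≤ β_i for every i and ∑_{i=1}^ℓ α_i ≤ k. Then there exists a matroid on ground set F whose independent sets are exactly the sets T ⊆ F satisfying |T ∩ P_i| ≤ β_i for every i = 1,…,ℓ and ∑_{i=1}^ℓ max(|T ∩ P_i|, α_i) ≤ k. -/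
theorem stmt18 {F : Type*} [Fintype F] (ℓ : ℕ) (hℓ : 1 ≤ ℓ)
    (P : Fin ℓ → Set F)
    (hPdisj : ∀ i j : Fin ℓ, i ≠ j → Disjoint (P i) (P j))
    (hPcover : (⋃ i, P i) = Set.univ)
    (k : ℕ) (α β : Fin ℓ → ℕ)
    (hαβ : ∀ i, α i ≤ β i) (hαk : ∑ i, α i ≤ k) :
    ∃ Mat : Matroid F, Mat.E = Set.univ ∧
      ∀ T : Set F, Mat.Indep T ↔
        ((∀ i, (T ∩ P i).ncard ≤ β i) ∧ ∑ i, max (T ∩ P i).ncard (α i) ≤ k) := by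
  classical
  have hsum : ∀ T : Set F, T.ncard = ∑ i, (T ∩ P i).ncard := by
    intro T
    have h1 : T = ⋃ i, (T ∩ P i) := by
      rw [← Set.inter_iUnion, hPcover, Set.inter_univ]
    have h2 := Set.ncard_iUnion_of_finite (s := fun i => T ∩ P i) (fun i => Set.toFinite _)
      (fun i j hij => (hPdisj i j hij).mono Set.inter_subset_right Set.inter_subset_right)
    rw [finsum_eq_sum_of_fintype] at h2
    rw [← h2, ← h1]
  have hins : ∀ (T : Set F) (x : F) (i : Fin ℓ), x ∈ P i → x ∉ T → ∀ j,
      (insert x T ∩ P j).ncard = (T ∩ P j).ncard + if j = i then 1 else 0 := by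
    intro T x i hx hxT j
    split_ifs with h
    · subst h
      rw [Set.insert_inter_of_mem hx, Set.ncard_insert_of_notMem (fun h => hxT h.1)]
    · rw [Set.insert_inter_of_notMem]
      · simp
      · exact fun hj => (Set.disjoint_left.1 (hPdisj j i h)) hj hx
  refine ⟨(IndepMatroid.ofFinite (E := Set.univ) Set.finite_univ
    (fun T => (∀ i, (T ∩ P i).ncard ≤ β i) ∧ ∑ i, max (T ∩ P i).ncard (α i) ≤ k)
    ?_ ?_ ?_ ?_).matroid, rfl, fun T => Iff.rfl⟩
  · simpa using hαk
  · rintro I J ⟨h1, h2⟩ hIJ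
    have hc : ∀ i, (I ∩ P i).ncard ≤ (J ∩ P i).ncard := fun i =>
      Set.ncard_le_ncard (Set.inter_subset_inter_left _ hIJ) (Set.toFinite _)
    exact ⟨fun i => (hc i).trans (h1 i),
      (Finset.sum_le_sum fun i _ => max_le_max (hc i) le_rfl).trans h2⟩
  · rintro I J ⟨hI1, hI2⟩ ⟨hJ1, hJ2⟩ hlt
    rw [hsum I, hsum J] at hlt
    have key : ∃ i, (I ∩ P i).ncard < (J ∩ P i).ncard ∧
        ((I ∩ P i).ncard < α i ∨ ∑ i, max (I ∩ P i).ncard (α i) + 1 ≤ k) := by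
      by_contra! hcon
      obtain ⟨i, -, hi⟩ := Finset.exists_lt_of_sum_lt hlt
      have hk := (hcon i hi).2
      have h3 : ∑ i, (max (I ∩ P i).ncard (α i) + (J ∩ P i).ncard) ≤
          ∑ i, (max (J ∩ P i).ncard (α i) + (I ∩ P i).ncard) := by
        refine Finset.sum_le_sum fun j _ => ?_
        have := hcon j
        by_cases h : (I ∩ P j).ncard < (J ∩ P j).ncard
        · have := (hcon j h).1
          omega
        · omega
      rw [Finset.sum_add_distrib, Finset.sum_add_distrib] at h3
      omega
    obtain ⟨i, hi, hor⟩ := key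
    obtain ⟨x, hxJ, hxI⟩ := Set.exists_mem_notMem_of_ncard_lt_ncard hi (Set.toFinite _)
    have hxI' : x ∉ I := fun h => hxI ⟨h, hxJ.2⟩
    refine ⟨x, hxJ.1, hxI', fun j => ?_, ?_⟩
    · rw [hins I x i hxJ.2 hxI']
      split_ifs with h
      · subst h
        exact (Nat.succ_le_of_lt hi).trans (hJ1 j)
      · exact hI1 j
    · rcases hor with h | h
      · refine le_trans (Finset.sum_le_sum fun j _ => ?_) hI2
        rw [hins I x i hxJ.2 hxI']
        split_ifs with h
        · subst h
          omega
        · simp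
      · refine le_trans ?_ h
        have : ∑ j, max (insert x I ∩ P j).ncard (α j) ≤
            ∑ j, (max (I ∩ P j).ncard (α j) + if j = i then 1 else 0) := by
          refine Finset.sum_le_sum fun j _ => ?_
          rw [hins I x i hxJ.2 hxI']
          split_ifs <;> omega
        rw [Finset.sum_add_distrib] at this
        simpa using this
  · exact fun I _ => Set.subset_univ I
end
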